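/- arXiv:0705.0403 — 5 statements merged into one kernel-verified Lean document; each statement's English description precedes it below -/
import Mathlib

section
/- Let M ∈ ℝ^{n×n} be symmetric positive definite with smallest eigenvalue λ_min(M) ≥ λ̄ > 0, let 0 < γ < 1, and let k > 1/(4γ(1−γ²)λ̄). Then the matrix Q = [[2k(1−γ²)M, −Iₙ],[−Iₙ, 2γIₙ]] ∈ ℝ^{2n×2n} is positive definite. -/
open Matrix

/-!
The Schur complement of the block `2γI` in `Q` is `2k(1-γ²)M - (2γ)⁻¹I`. It is diagonal in an
eigenbasis of `M`, with eigenvalues `2k(1-γ²)λᵢ - (2γ)⁻¹`, and `k > 1/(4γ(1-γ²)λ̄)` says exactly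
that `2k(1-γ²)λ̄ > (2γ)⁻¹`.
-/

section BlockMatrices

variable {m n R : Type*} [Finite m]

theorem posDef_fromBlocks_zero_iff [Finite n] [Ring R] [PartialOrder R] [StarRing R]
    [StarOrderedRing R] {A : Matrix m m R} {D : Matrix n n R} :
    (fromBlocks A 0 0 D).PosDef ↔ A.PosDef ∧ D.PosDef := by
  refine ⟨fun h ↦ ⟨h.submatrix Sum.inl_injective, h.submatrix Sum.inr_injective⟩, ?_⟩
  rintro ⟨hA, hD⟩
  have := Fintype.ofFinite m
  have := Fintype.ofFinite n
  refine .of_dotProduct_mulVec_pos (hA.1.fromBlocks conjTranspose_zero hD.1) fun z hz ↦ ?_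
  obtain ⟨x, y, rfl⟩ : ∃ x y, z = Sum.elim x y := ⟨_, _, (Sum.elim_comp_inl_inr z).symm⟩
  have form_eq : star (Sum.elim x y) ⬝ᵥ (fromBlocks A 0 0 D *ᵥ Sum.elim x y) =
      star x ⬝ᵥ (A *ᵥ x) + star y ⬝ᵥ (D *ᵥ y) := by
    simp [fromBlocks_mulVec, Function.star_sumElim]
  rw [form_eq]
  by_cases hx : x = 0
  · have hy : y ≠ 0 := by
      rintro rfl
      exact hz (by simp [hx])
    exact add_pos_of_nonneg_of_pos (hA.posSemidef.dotProduct_mulVec_nonneg x)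
      (hD.dotProduct_mulVec_pos hy)
  · exact add_pos_of_pos_of_nonneg (hA.dotProduct_mulVec_pos hx)
      (hD.posSemidef.dotProduct_mulVec_nonneg y)

theorem posDef_fromBlocks_iff_schurComplement [Fintype n] [DecidableEq n] [CommRing R]
    [PartialOrder R] [StarRing R] [StarOrderedRing R] (A : Matrix m m R) (B : Matrix m n R)
    {D : Matrix n n R} [Invertible D] (hD : D.IsHermitian) :
    (fromBlocks A B Bᴴ D).PosDef ↔ (A - B * D⁻¹ * Bᴴ).PosDef ∧ D.PosDef := by
  classical
  have := Fintype.ofFinite m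
  set U : Matrix (m ⊕ n) (m ⊕ n) R := fromBlocks 1 (B * D⁻¹) 0 1 with hU
  have hU_unit : IsUnit U := by simp [hU, isUnit_fromBlocks_zero₂₁]
  have hU_star : star U = fromBlocks 1 0 (D⁻¹ * Bᴴ) 1 := by
    simp [hU, star_eq_conjTranspose, fromBlocks_conjTranspose, conjTranspose_nonsing_inv, hD.eq]
  have ldu : fromBlocks A B Bᴴ D = U * fromBlocks (A - B * D⁻¹ * Bᴴ) 0 0 D * star U := by
    rw [hU_star, ← invOf_eq_nonsing_inv, fromBlocks_eq_of_invertible₂₂, invOf_eq_nonsing_inv]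
  rw [ldu, IsUnit.posDef_star_right_conjugate_iff hU_unit, posDef_fromBlocks_zero_iff]

end BlockMatrices

section Spectral

open scoped ComplexOrder

variable {n 𝕜 : Type*} [Fintype n] [DecidableEq n] [RCLike 𝕜] {M : Matrix n n 𝕜}

theorem posDef_smul_sub_smul_one_iff (hM : M.IsHermitian) (a c : ℝ) :
    (a • M - c • (1 : Matrix n n 𝕜)).PosDef ↔ ∀ i, c < a * hM.eigenvalues i := by
  let U : Matrix n n 𝕜 := hM.eigenvectorUnitary
  have hU : U * star U = 1 := Unitary.coe_mul_star_self _
  have spectral : M = U * diagonal (RCLike.ofReal ∘ hM.eigenvalues) * star U :=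
    hM.spectral_theorem
  have diagonalized : a • M - c • (1 : Matrix n n 𝕜) =
      U * diagonal (fun i ↦ ((a * hM.eigenvalues i - c : ℝ) : 𝕜)) * star U := by
    have diagonal_eq : diagonal (fun i ↦ ((a * hM.eigenvalues i - c : ℝ) : 𝕜)) =
        a • diagonal (RCLike.ofReal ∘ hM.eigenvalues) - c • (1 : Matrix n n 𝕜) := by
      ext i j
      by_cases hij : i = j <;> simp [hij, RCLike.real_smul_eq_coe_mul]
    rw [diagonal_eq, mul_sub, sub_mul, mul_smul_comm, smul_mul_assoc, ← spectral, mul_smul_comm,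
      smul_mul_assoc, mul_one, hU]
  rw [diagonalized, IsUnit.posDef_star_right_conjugate_iff (.of_mul_eq_one _ hU),
    posDef_diagonal_iff]
  simp only [RCLike.ofReal_pos, sub_pos]

theorem posDef_fromBlocks_smul_neg_one_iff (hM : M.IsHermitian) (a : ℝ) {d : ℝ} (hd : 0 < d) :
    (fromBlocks (a • M) (-1) (-1) (d • (1 : Matrix n n 𝕜))).PosDef ↔
      ∀ i, d⁻¹ < a * hM.eigenvalues i := by
  have hD : (d • (1 : Matrix n n 𝕜)).PosDef := PosDef.one.smul hd
  let : Invertible (d • (1 : Matrix n n 𝕜)) := hD.isUnit.invertible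
  have hinv : (d • (1 : Matrix n n 𝕜))⁻¹ = d⁻¹ • 1 :=
    inv_eq_right_inv (by simp [smul_smul, hd.ne'])
  have schur := posDef_fromBlocks_iff_schurComplement (a • M) (-1) hD.1
  simpa [hinv, hD, posDef_smul_sub_smul_one_iff hM] using schur

theorem Q_posDef_general (hM : M.IsHermitian) {lam γ k : ℝ} (hlam : 0 < lam)
    (heig : ∀ i, lam ≤ hM.eigenvalues i) (hγ0 : 0 < γ) (hγ1 : γ < 1)
    (hk : 1 / (4 * γ * (1 - γ ^ 2) * lam) < k) :
    (fromBlocks ((2 * k * (1 - γ ^ 2)) • M) (-1) (-1)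
      ((2 * γ) • (1 : Matrix n n 𝕜))).PosDef := by
  rw [posDef_fromBlocks_smul_neg_one_iff hM _ (by positivity)]
  intro i
  have hγ : 0 < 1 - γ ^ 2 := by nlinarith
  have hk0 : 0 < k := lt_trans (by positivity) hk
  calc (2 * γ)⁻¹ = 2 * (1 / (4 * γ * (1 - γ ^ 2) * lam)) * (1 - γ ^ 2) * lam := by
        field_simp
        norm_num
    _ < 2 * k * (1 - γ ^ 2) * lam := by gcongr
    _ ≤ 2 * k * (1 - γ ^ 2) * hM.eigenvalues i := by gcongr; exact heig i

end Spectral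

/-- If `M ∈ ℝ^{n×n}` is symmetric positive definite with all eigenvalues
`≥ λ̄ > 0`, `0 < γ < 1`, and `k > 1/(4γ(1-γ²)λ̄)`, then
`Q = [[2k(1-γ²)M, -I],[-I, 2γI]]` is positive definite. -/
theorem Q_posDef {n : ℕ}
    (M : Matrix (Fin n) (Fin n) ℝ) (hM : M.PosDef)
    (lam γ k : ℝ) (hlam : 0 < lam)
    (heig : ∀ i, lam ≤ hM.1.eigenvalues i)
    (hγ0 : 0 < γ) (hγ1 : γ < 1)
    (hk : 1 / (4 * γ * (1 - γ ^ 2) * lam) < k) :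
    (Matrix.fromBlocks ((2 * k * (1 - γ ^ 2)) • M)
      (-(1 : Matrix (Fin n) (Fin n) ℝ)) (-(1 : Matrix (Fin n) (Fin n) ℝ))
      ((2 * γ) • (1 : Matrix (Fin n) (Fin n) ℝ))).PosDef :=
  Q_posDef_general hM.1 hlam heig hγ0 hγ1 hk
end

section
/- Let M ∈ ℝ^{n×n} be symmetric with eigenvalues λ₁,…,λₙ (with multiplicity), let k > 0 and 0 < γ < 1, and let Q = [[2k(1−γ²)M, −Iₙ],[−Iₙ, 2γIₙ]] ∈ ℝ^{2n×2n}. Then the eigenvalues of Q are exactly the 2n real numbers μ_{i,±} = (1−γ²)kλᵢ + γ ± √(((1−γ²)kλᵢ + γ)² − 4γ(1−γ²)kλᵢ + 1) for i = 1,…,n; equivalently, writing aᵢ = (1−γ²)kλᵢ, μ_{i,±} = aᵢ + γ ± √((aᵢ − γ)² + 1). -/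
/-!
Polynomials in a diagonalizable matrix `M` are diagonalized simultaneously by the eigenvectors of
`M`. Conjugating by the change of basis in both summands and regrouping the indices therefore
decouples a `2 × 2` block matrix whose blocks are polynomials in `M` into one `2 × 2` matrix per
eigenvalue. For `Q` the matrix at `λᵢ` is `!![2 aᵢ, -1; -1, 2 γ]` with `aᵢ = (1 - γ²) k λᵢ`, whose
eigenvalues are `aᵢ + γ ± √((aᵢ - γ)² + 1)`.
-/

open Matrix

section Charpoly

open Polynomial

variable {R m n : Type*} [CommRing R] [Fintype m] [DecidableEq m] [Fintype n] [DecidableEq n]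

theorem charpoly_blockDiagonal (A : n → Matrix m m R) :
    (blockDiagonal A).charpoly = ∏ i, (A i).charpoly := by
  have hcharmatrix : (blockDiagonal A).charmatrix = blockDiagonal fun i => (A i).charmatrix := by
    ext ⟨i, k⟩ ⟨j, l⟩
    by_cases hkl : k = l <;> by_cases hij : i = j <;>
      simp [blockDiagonal_apply, hkl, hij]
  simp only [charpoly, hcharmatrix, det_blockDiagonal]

theorem charpoly_fromBlocks_diagonal (a b c d : n → R) :
    (fromBlocks (diagonal a) (diagonal b) (diagonal c) (diagonal d)).charpoly =
      ∏ i, !![a i, b i; c i, d i].charpoly := by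
  let e : n ⊕ n ≃ Fin 2 × n :=
    (Equiv.boolProdEquivSum n).symm.trans (finTwoEquiv.symm.prodCongr (Equiv.refl n))
  have hreindex :
      reindex e e (fromBlocks (diagonal a) (diagonal b) (diagonal c) (diagonal d)) =
        blockDiagonal fun i => !![a i, b i; c i, d i] := by
    rw [← Equiv.eq_symm_apply]
    ext (i | i) (j | j) <;> simp [e, blockDiagonal_apply, diagonal_apply, finTwoEquiv]
  rw [← charpoly_reindex e, hreindex, charpoly_blockDiagonal]

theorem charpoly_fromBlocks_units_conj (U : (Matrix m m R)ˣ) (V : (Matrix n n R)ˣ)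
    (A : Matrix m m R) (B : Matrix m n R) (C : Matrix n m R) (D : Matrix n n R) :
    (fromBlocks (U.val * A * U⁻¹.val) (U.val * B * V⁻¹.val)
      (V.val * C * U⁻¹.val) (V.val * D * V⁻¹.val)).charpoly = (fromBlocks A B C D).charpoly := by
  have hfactor :
      fromBlocks (U.val * A * U⁻¹.val) (U.val * B * V⁻¹.val)
          (V.val * C * U⁻¹.val) (V.val * D * V⁻¹.val) =
        fromBlocks U.val 0 0 V.val * (fromBlocks A B C D * fromBlocks U⁻¹.val 0 0 V⁻¹.val) := by
    simp [fromBlocks_multiply, Matrix.mul_assoc]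
  have hinv : fromBlocks U⁻¹.val 0 0 V⁻¹.val * fromBlocks U.val 0 0 V.val = 1 := by
    simp [fromBlocks_multiply]
  rw [hfactor, charpoly_mul_comm, Matrix.mul_assoc, hinv, Matrix.mul_one]

theorem charpoly_fin_two_eq_mul [Nontrivial R] {A : Matrix (Fin 2) (Fin 2) R} {μ ν : R}
    (htrace : A.trace = μ + ν) (hdet : A.det = μ * ν) :
    A.charpoly = (X - C μ) * (X - C ν) := by
  rw [charpoly_fin_two, htrace, hdet, C_add, C_mul]
  ring

theorem aeval_units_conj {S A : Type*} [CommSemiring S] [Semiring A] [Algebra S A] (u : Aˣ)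
    (a : A) (p : S[X]) : aeval (u.val * a * u⁻¹.val) p = u.val * aeval a p * u⁻¹.val := by
  simpa [ConjAct.units_smul_def] using aeval_smul p (ConjAct.toConjAct u) a

theorem aeval_diagonal {S A : Type*} [CommSemiring S] [Semiring A] [Algebra S A] (d : n → A)
    (p : S[X]) : aeval (diagonal d) p = diagonal fun i => aeval (d i) p := by
  simpa [aeval_pi_apply] using aeval_algHom_apply (diagonalAlgHom S (n := n) (α := A)) d p

theorem charpoly_fromBlocks_aeval_of_eq_units_conj_diagonal {S : Type*} [CommSemiring S]
    [Algebra S R] {M : Matrix n n R} {U : (Matrix n n R)ˣ} {d : n → R}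
    (hM : M = U.val * diagonal d * U⁻¹.val) (p q r s : S[X]) :
    (fromBlocks (aeval M p) (aeval M q) (aeval M r) (aeval M s)).charpoly =
      ∏ i, !![aeval (d i) p, aeval (d i) q; aeval (d i) r, aeval (d i) s].charpoly := by
  simp only [hM, aeval_units_conj, aeval_diagonal, charpoly_fromBlocks_units_conj,
    charpoly_fromBlocks_diagonal]

end Charpoly

section IsHermitian

open Polynomial

variable {𝕜 n : Type*} [RCLike 𝕜] [Fintype n] [DecidableEq n]

theorem map_eigenvalues_eq_of_charpoly_eq {A : Matrix n n 𝕜} (hA : A.IsHermitian)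
    {s : Multiset ℝ} (h : A.charpoly = (s.map fun x : ℝ => X - C (x : 𝕜)).prod) :
    Finset.univ.val.map hA.eigenvalues = s := by
  have hroots : A.charpoly.roots = s.map RCLike.ofReal := by
    simpa only [h, Multiset.map_map, Function.comp_def] using
      roots_multiset_prod_X_sub_C (s.map (RCLike.ofReal (K := 𝕜)))
  apply Multiset.map_injective (RCLike.ofReal_injective (K := 𝕜))
  rw [Multiset.map_map, ← hA.roots_charpoly_eq_eigenvalues, hroots]

theorem charpoly_symm_fin_two (a b d : ℝ) :
    !![(a : 𝕜), (b : 𝕜); (b : 𝕜), (d : 𝕜)].charpoly =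
      (X - C (((a + d) / 2 + √(((a - d) / 2) ^ 2 + b ^ 2) : ℝ) : 𝕜)) *
        (X - C (((a + d) / 2 - √(((a - d) / 2) ^ 2 + b ^ 2) : ℝ) : 𝕜)) := by
  apply charpoly_fin_two_eq_mul
  · rw [trace_fin_two_of]
    norm_cast
    ring
  · rw [det_fin_two_of]
    norm_cast
    have hsq : √(((a - d) / 2) ^ 2 + b ^ 2) ^ 2 = ((a - d) / 2) ^ 2 + b ^ 2 :=
      Real.sq_sqrt (by positivity)
    linear_combination hsq

theorem charpoly_fromBlocks_aeval {M : Matrix n n 𝕜} (hM : M.IsHermitian) (p q r s : ℝ[X]) :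
    (fromBlocks (aeval M p) (aeval M q) (aeval M r) (aeval M s)).charpoly =
      ∏ i, !![((p.eval (hM.eigenvalues i) : ℝ) : 𝕜), ((q.eval (hM.eigenvalues i) : ℝ) : 𝕜);
        ((r.eval (hM.eigenvalues i) : ℝ) : 𝕜), ((s.eval (hM.eigenvalues i) : ℝ) : 𝕜)].charpoly := by
  have hspectral : M = (Unitary.toUnits hM.eigenvectorUnitary).val *
      diagonal (RCLike.ofReal ∘ hM.eigenvalues) *
        (Unitary.toUnits hM.eigenvectorUnitary)⁻¹.val :=
    hM.spectral_theorem
  have haeval (f : ℝ[X]) (x : ℝ) : aeval (x : 𝕜) f = ((f.eval x : ℝ) : 𝕜) :=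
    aeval_algebraMap_apply_eq_algebraMap_eval x f
  simp only [charpoly_fromBlocks_aeval_of_eq_units_conj_diagonal hspectral, Function.comp_apply,
    haeval]

theorem map_eigenvalues_fromBlocks_aeval {M : Matrix n n 𝕜} (hM : M.IsHermitian) (p q s : ℝ[X])
    (hB : (fromBlocks (aeval M p) (aeval M q) (aeval M q) (aeval M s)).IsHermitian) :
    Finset.univ.val.map hB.eigenvalues =
      Finset.univ.val.map (fun i =>
        (p.eval (hM.eigenvalues i) + s.eval (hM.eigenvalues i)) / 2 +
          √(((p.eval (hM.eigenvalues i) - s.eval (hM.eigenvalues i)) / 2) ^ 2 +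
            q.eval (hM.eigenvalues i) ^ 2)) +
      Finset.univ.val.map (fun i =>
        (p.eval (hM.eigenvalues i) + s.eval (hM.eigenvalues i)) / 2 -
          √(((p.eval (hM.eigenvalues i) - s.eval (hM.eigenvalues i)) / 2) ^ 2 +
            q.eval (hM.eigenvalues i) ^ 2)) := by
  apply map_eigenvalues_eq_of_charpoly_eq
  rw [charpoly_fromBlocks_aeval hM]
  simp only [charpoly_symm_fin_two, Finset.prod_mul_distrib, Multiset.map_add, Multiset.map_map,
    Multiset.prod_add, Function.comp_def, Finset.prod_map_val]

theorem Q_eigenvalues_general {M : Matrix n n 𝕜} (hM : M.IsHermitian) (k γ : ℝ)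
    {Q : Matrix (n ⊕ n) (n ⊕ n) 𝕜}
    (hQ : Q = fromBlocks ((2 * k * (1 - γ ^ 2)) • M) (-1) (-1) ((2 * γ) • 1))
    (hQh : Q.IsHermitian) :
    Finset.univ.val.map hQh.eigenvalues =
      Finset.univ.val.map (fun i => (1 - γ ^ 2) * k * hM.eigenvalues i + γ +
        √(((1 - γ ^ 2) * k * hM.eigenvalues i - γ) ^ 2 + 1)) +
      Finset.univ.val.map (fun i => (1 - γ ^ 2) * k * hM.eigenvalues i + γ -
        √(((1 - γ ^ 2) * k * hM.eigenvalues i - γ) ^ 2 + 1)) := by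
  have hblocks : Q = fromBlocks (aeval M ((2 * k * (1 - γ ^ 2)) • (X : ℝ[X]))) (aeval M (-1 : ℝ[X]))
      (aeval M (-1 : ℝ[X])) (aeval M ((2 * γ) • (1 : ℝ[X]))) := by
    simp only [hQ, map_smul, map_neg, map_one, aeval_X]
  subst hblocks
  have hhalf_sum (l : ℝ) : (2 * k * (1 - γ ^ 2) * l + 2 * γ) / 2 = (1 - γ ^ 2) * k * l + γ := by
    ring
  have hhalf_sub (l : ℝ) : (2 * k * (1 - γ ^ 2) * l - 2 * γ) / 2 = (1 - γ ^ 2) * k * l - γ := by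
    ring
  simpa [hhalf_sum, hhalf_sub] using
    map_eigenvalues_fromBlocks_aeval hM ((2 * k * (1 - γ ^ 2)) • X) (-1) ((2 * γ) • 1) hQh

end IsHermitian

/-- For symmetric `M ∈ ℝ^{n×n}` with eigenvalues `λ₁,…,λₙ` (with multiplicity),
`k > 0`, `0 < γ < 1`, the eigenvalues (with multiplicity) of
`Q = [[2k(1-γ²)M, -I],[-I, 2γI]] ∈ ℝ^{2n×2n}` are exactly the `2n` numbers
`(1-γ²)kλᵢ + γ ± √(((1-γ²)kλᵢ - γ)² + 1)`, `i = 1,…,n`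
(equivalently `± √(((1-γ²)kλᵢ + γ)² - 4γ(1-γ²)kλᵢ + 1)`), stated as a multiset equality. -/
theorem Q_eigenvalues {n : ℕ}
    (M : Matrix (Fin n) (Fin n) ℝ) (hM : M.IsHermitian)
    (k γ : ℝ) (hk : 0 < k) (hγ0 : 0 < γ) (hγ1 : γ < 1)
    (Q : Matrix (Fin n ⊕ Fin n) (Fin n ⊕ Fin n) ℝ)
    (hQ : Q = Matrix.fromBlocks ((2 * k * (1 - γ ^ 2)) • M)
      (-(1 : Matrix (Fin n) (Fin n) ℝ)) (-(1 : Matrix (Fin n) (Fin n) ℝ))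
      ((2 * γ) • (1 : Matrix (Fin n) (Fin n) ℝ)))
    (hQh : Q.IsHermitian) :
    (Finset.univ : Finset (Fin n ⊕ Fin n)).val.map hQh.eigenvalues =
      (Finset.univ : Finset (Fin n)).val.map
        (fun i => (1 - γ ^ 2) * k * hM.eigenvalues i + γ +
          Real.sqrt (((1 - γ ^ 2) * k * hM.eigenvalues i - γ) ^ 2 + 1)) +
      (Finset.univ : Finset (Fin n)).val.map
        (fun i => (1 - γ ^ 2) * k * hM.eigenvalues i + γ -
          Real.sqrt (((1 - γ ^ 2) * k * hM.eigenvalues i - γ) ^ 2 + 1)) :=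
  Q_eigenvalues_general hM k γ hQ hQh
end

section
/- Let M ∈ ℝ^{n×n} be symmetric positive definite with all eigenvalues ≥ λ̄ > 0, let 0 < γ < 1 and k > 1/(4γ(1−γ²)λ̄), and set μ̄ = (1−γ²)kλ̄ + γ − √(((1−γ²)kλ̄ − γ)² + 1). Then for every z ∈ ℝ^{2n}, zᵀQz ≥ μ̄‖z‖², where Q = [[2k(1−γ²)M, −Iₙ],[−Iₙ, 2γIₙ]] and ‖·‖ is the Euclidean norm; i.e., Q − μ̄I is positive semidefinite. -/
open Matrix

/-!
After `μ̄I` is subtracted, the diagonal blocks of `Q` are bounded below by the scalars `s + (a - γ)`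
and `s - (a - γ)`, where `a = (1 - γ²)kλ̄` and `s = √((a - γ)² + 1)`. These are positive and have
product `s² - (a - γ)² = 1`, so by Schur complements they dominate the contraction `-I` in the
off-diagonal blocks.
-/

theorem mul_star_dotProduct_self_le_of_posSemidef_sub {R n : Type*} [CommRing R] [PartialOrder R]
    [StarRing R] [AddLeftMono R] [Fintype n] [DecidableEq n] {A : Matrix n n R} {c : R}
    (hA : (A - c • (1 : Matrix n n R)).PosSemidef) (z : n → R) :
    c * (star z ⬝ᵥ z) ≤ star z ⬝ᵥ A *ᵥ z := by
  simpa only [sub_mulVec, smul_mulVec, one_mulVec, dotProduct_sub, dotProduct_smul, smul_eq_mul,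
    sub_nonneg] using hA.dotProduct_mulVec_nonneg z

theorem posSemidef_fromBlocks_zero₁₂_zero₂₁ {R m n : Type*} [Ring R] [PartialOrder R] [StarRing R]
    [AddLeftMono R] [Finite m] [Finite n] {A : Matrix m m R} {D : Matrix n n R}
    (hA : A.PosSemidef) (hD : D.PosSemidef) :
    (fromBlocks A 0 0 D).PosSemidef := by
  cases nonempty_fintype m
  cases nonempty_fintype n
  refine .of_dotProduct_mulVec_nonneg (hA.isHermitian.fromBlocks (by simp) hD.isHermitian) ?_
  intro z
  have hsum := add_nonneg (hA.dotProduct_mulVec_nonneg (z ∘ Sum.inl))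
    (hD.dotProduct_mulVec_nonneg (z ∘ Sum.inr))
  simpa [fromBlocks_mulVec, dotProduct, Fintype.sum_sum_type] using hsum

section Hermitian

open scoped ComplexOrder

variable {𝕜 m n : Type*} [RCLike 𝕜] [DecidableEq m] [DecidableEq n]

open scoped MatrixOrder in
theorem posSemidef_sub_smul_one_of_le_eigenvalues [Fintype n] {A : Matrix n n 𝕜}
    (hA : A.IsHermitian) {c : ℝ} (hc : ∀ i, c ≤ hA.eigenvalues i) :
    (A - c • (1 : Matrix n n 𝕜)).PosSemidef := by
  rw [← le_iff, ← Algebra.algebraMap_eq_smul_one, algebraMap_le_iff_le_spectrum hA.isSelfAdjoint,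
    hA.spectrum_real_eq_range_eigenvalues]
  exact Set.forall_mem_range.2 hc

theorem posSemidef_fromBlocks_smul_one_of_mul_eq_one [Fintype m] [Finite n] {p q : ℝ}
    (hp : 0 < p) (hpq : p * q = 1) {B : Matrix m n 𝕜} (hB : (1 - Bᴴ * B).PosSemidef) :
    (fromBlocks (p • (1 : Matrix m m 𝕜)) B Bᴴ (q • (1 : Matrix n n 𝕜))).PosSemidef := by
  have hP : (p • (1 : Matrix m m 𝕜)).PosDef := PosDef.one.smul hp
  have hq : 0 ≤ q := (pos_of_mul_pos_right (hpq ▸ one_pos) hp.le).le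
  have hinv : (p • (1 : Matrix m m 𝕜))⁻¹ = q • 1 :=
    inv_eq_right_inv (by simp [smul_smul, mul_comm, hpq])
  have := hP.isUnit.invertible
  rw [PosDef.fromBlocks₁₁ B _ hP, hinv]
  simpa [smul_sub] using hB.smul hq

theorem posSemidef_fromBlocks_sub_smul_one [Fintype m] [Finite n] {A : Matrix m m 𝕜}
    {B : Matrix m n 𝕜} {D : Matrix n n 𝕜} {a d : ℝ}
    (hA : (A - (2 * a) • (1 : Matrix m m 𝕜)).PosSemidef)
    (hB : (1 - Bᴴ * B).PosSemidef) (hD : (D - (2 * d) • (1 : Matrix n n 𝕜)).PosSemidef) :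
    (fromBlocks A B Bᴴ D -
      (a + d - √((a - d) ^ 2 + 1)) • (1 : Matrix (m ⊕ n) (m ⊕ n) 𝕜)).PosSemidef := by
  set s := √((a - d) ^ 2 + 1)
  have hs : s ^ 2 = (a - d) ^ 2 + 1 := Real.sq_sqrt (by positivity)
  have hp : 0 < s + (a - d) := neg_lt_iff_pos_add'.1 (Real.neg_sqrt_lt_of_sq_lt (lt_add_one _))
  have hpq : (s + (a - d)) * (s - (a - d)) = 1 := by linear_combination hs
  have hsplit : fromBlocks A B Bᴴ D - (a + d - s) • (1 : Matrix (m ⊕ n) (m ⊕ n) 𝕜) =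
      fromBlocks (A - (2 * a) • 1) 0 0 (D - (2 * d) • 1) +
        fromBlocks ((s + (a - d)) • 1) B Bᴴ ((s - (a - d)) • 1) := by
    rw [sub_eq_iff_eq_add, ← fromBlocks_one, fromBlocks_smul, fromBlocks_add, fromBlocks_add,
      fromBlocks_inj]
    refine ⟨?_, by simp, by simp, ?_⟩ <;> module
  rw [hsplit]
  exact (posSemidef_fromBlocks_zero₁₂_zero₂₁ hA hD).add
    (posSemidef_fromBlocks_smul_one_of_mul_eq_one hp hpq hB)

theorem Q_quadratic_form_lower_bound_general [Fintype n] {M : Matrix n n 𝕜} (hM : M.IsHermitian)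
    {lam γ k : ℝ} (heig : ∀ i, lam ≤ hM.eigenvalues i) (hk : 0 ≤ (1 - γ ^ 2) * k) :
    (fromBlocks ((2 * k * (1 - γ ^ 2)) • M) (-1 : Matrix n n 𝕜) (-1 : Matrix n n 𝕜)
        ((2 * γ) • (1 : Matrix n n 𝕜)) -
      ((1 - γ ^ 2) * k * lam + γ - √(((1 - γ ^ 2) * k * lam - γ) ^ 2 + 1)) •
        (1 : Matrix (n ⊕ n) (n ⊕ n) 𝕜)).PosSemidef := by
  have hA : ((2 * k * (1 - γ ^ 2)) • M -
      (2 * ((1 - γ ^ 2) * k * lam)) • (1 : Matrix n n 𝕜)).PosSemidef := by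
    convert (posSemidef_sub_smul_one_of_le_eigenvalues hM heig).smul
      (mul_nonneg zero_le_two hk) using 1
    module
  have hB : (1 - (-1 : Matrix n n 𝕜)ᴴ * -1).PosSemidef := by simpa using PosSemidef.zero
  have hD : ((2 * γ) • (1 : Matrix n n 𝕜) - (2 * γ) • 1).PosSemidef := by
    simpa using PosSemidef.zero
  simpa using posSemidef_fromBlocks_sub_smul_one hA hB hD

end Hermitian

/-- If `M ∈ ℝ^{n×n}` is symmetric positive definite with all eigenvalues
`≥ λ̄ > 0`, `0 < γ < 1`, `k > 1/(4γ(1-γ²)λ̄)`, and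
`μ̄ = (1-γ²)kλ̄ + γ - √(((1-γ²)kλ̄ - γ)² + 1)`, then for every `z ∈ ℝ^{2n}`
`zᵀQz ≥ μ̄‖z‖²`, where `Q = [[2k(1-γ²)M, -I],[-I, 2γI]]` and `z ⬝ᵥ z = ‖z‖²` is the
squared Euclidean norm. -/
theorem Q_quadratic_form_lower_bound {n : ℕ}
    (M : Matrix (Fin n) (Fin n) ℝ) (hM : M.PosDef)
    (lam γ k : ℝ) (hlam : 0 < lam)
    (heig : ∀ i, lam ≤ hM.1.eigenvalues i)
    (hγ0 : 0 < γ) (hγ1 : γ < 1)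
    (hk : 1 / (4 * γ * (1 - γ ^ 2) * lam) < k) :
    ∀ z : Fin n ⊕ Fin n → ℝ,
      ((1 - γ ^ 2) * k * lam + γ -
          Real.sqrt (((1 - γ ^ 2) * k * lam - γ) ^ 2 + 1)) * (z ⬝ᵥ z) ≤
        z ⬝ᵥ (Matrix.fromBlocks ((2 * k * (1 - γ ^ 2)) • M)
          (-(1 : Matrix (Fin n) (Fin n) ℝ)) (-(1 : Matrix (Fin n) (Fin n) ℝ))
          ((2 * γ) • (1 : Matrix (Fin n) (Fin n) ℝ))).mulVec z := by
  have hγ : 0 < 1 - γ ^ 2 := by nlinarith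
  have hk0 : 0 < k := hk.trans' (by positivity)
  intro z
  simpa using mul_star_dotProduct_self_le_of_posSemidef_sub
    (Q_quadratic_form_lower_bound_general (𝕜 := ℝ) hM.1 heig (mul_pos hγ hk0).le) z
end

section
/- Under the hypotheses of Theorem 1 (finite 𝒫, symmetric positive definite M_p with eigenvalues ≥ λ̄ > 0, 0 < γ < 1, k > 1/(4γ(1−γ²)λ̄), arbitrary switching signal σ, differentiable ε with ε̇(t) = (F_{σ(t)} ⊗ I₂)ε(t) + g(t)), suppose additionally that δ(t) ≡ 0 (i.e., δ̄ = 0, the leader's input a(t) = a₀(t) is known). Then ε(t) → 0 as t → ∞; in fact ‖ε(t)‖² ≤ (V(ε(0))/(1−γ)) e^{−βt} for all t ≥ 0, where V(z) = zᵀ(P ⊗ I₂)z, P = [[Iₙ, −γIₙ],[−γIₙ, Iₙ]], and β = μ̄/(2(1+γ)) with μ̄ = (1−γ²)kλ̄ + γ − √(((1−γ²)kλ̄ − γ)² + 1). -/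
open Matrix Kronecker

/-!
With `P` as Lyapunov matrix, the off-diagonal contribution of `M` cancels:
`P F = [[-(1-γ²)kM, I], [0, -γI]]`. Hence, writing `a = (1-γ²)kλ̄`, the derivative of `V = zᵀPz`
is at most `-2a|x|² + 2x·v - 2γ|v|² ≤ -μ̄(|x|² + |v|²)`, where `μ̄` is the least eigenvalue of
`[[2a, -1], [-1, 2γ]]`, which is positive exactly because `4aγ > 1`. Since
`(1-γ)|z|² ≤ V ≤ (1+γ)|z|²`, Grönwall's inequality gives exponential decay, in fact at the rate
`μ̄/(1+γ)`. Quadratic inequalities for a matrix `A` pass to `A ⊗ I` one component at a time.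
-/

open Set Filter Topology

section QuadraticForms

variable {m d : Type*} [Fintype m]

lemma dotProduct_self_nonneg (x : m → ℝ) : 0 ≤ x ⬝ᵥ x := by
  simpa only [star_trivial] using dotProduct_self_star_nonneg x

open scoped MatrixOrder in
lemma mul_dotProduct_self_le_of_le_eigenvalues [DecidableEq m] {A : Matrix m m ℝ}
    (hA : A.IsHermitian) {c : ℝ} (hc : ∀ i, c ≤ hA.eigenvalues i) (x : m → ℝ) :
    c * (x ⬝ᵥ x) ≤ x ⬝ᵥ A *ᵥ x := by
  have hle : algebraMap ℝ (Matrix m m ℝ) c ≤ A := by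
    rw [algebraMap_le_iff_le_spectrum hA, hA.spectrum_real_eq_range_eigenvalues]
    exact forall_mem_range.mpr hc
  have hnonneg := (Matrix.le_iff.mp hle).dotProduct_mulVec_nonneg x
  simp only [star_trivial, Algebra.algebraMap_eq_smul_one, sub_mulVec, smul_mulVec, one_mulVec,
    dotProduct_sub, dotProduct_smul, smul_eq_mul] at hnonneg
  exact sub_nonneg.mp hnonneg

lemma two_mul_dotProduct_le_of_mul_eq_one {p q : ℝ} (hp : 0 < p) (hpq : p * q = 1)
    (x v : m → ℝ) : 2 * (x ⬝ᵥ v) ≤ p * (x ⬝ᵥ x) + q * (v ⬝ᵥ v) := by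
  have hq : 0 < q := pos_of_mul_pos_right (hpq ▸ one_pos) hp.le
  have hsq : q * ((p • x - v) ⬝ᵥ (p • x - v)) =
      p * (x ⬝ᵥ x) + q * (v ⬝ᵥ v) - 2 * (x ⬝ᵥ v) := by
    simp only [sub_dotProduct, dotProduct_sub, smul_dotProduct, dotProduct_smul, smul_eq_mul,
      dotProduct_comm v x]
    linear_combination (p * (x ⬝ᵥ x) - 2 * (x ⬝ᵥ v)) * hpq
  linarith [mul_nonneg hq.le (dotProduct_self_nonneg (p • x - v))]

variable [Fintype d] [DecidableEq d]

lemma dotProduct_kronecker_one_mulVec {R : Type*} [NonAssocSemiring R] (A : Matrix m m R)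
    (z : m × d → R) :
    z ⬝ᵥ (A ⊗ₖ (1 : Matrix d d R)) *ᵥ z =
      ∑ c, (fun i => z (i, c)) ⬝ᵥ A *ᵥ (fun i => z (i, c)) := by
  simp [mulVec, dotProduct, Fintype.sum_prod_type_right, Matrix.one_apply]

lemma mul_dotProduct_kronecker_one_mulVec_le {A B : Matrix m m ℝ} {a b : ℝ}
    (h : ∀ x, a * (x ⬝ᵥ A *ᵥ x) ≤ b * (x ⬝ᵥ B *ᵥ x)) (z : m × d → ℝ) :
    a * (z ⬝ᵥ (A ⊗ₖ (1 : Matrix d d ℝ)) *ᵥ z) ≤ b * (z ⬝ᵥ (B ⊗ₖ (1 : Matrix d d ℝ)) *ᵥ z) := by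
  simp only [dotProduct_kronecker_one_mulVec, Finset.mul_sum]
  exact Finset.sum_le_sum fun c _ => h fun i => z (i, c)

end QuadraticForms

section LyapunovDecay

variable {m : Type*} [Fintype m]

lemma tendsto_zero_of_dotProduct_self_tendsto_zero {α : Type*} {l : Filter α} {z : α → m → ℝ}
    (h : Tendsto (fun a => z a ⬝ᵥ z a) l (𝓝 0)) : Tendsto z l (𝓝 0) := by
  refine tendsto_pi_nhds.mpr fun i => ?_
  have hsq : Tendsto (fun a => z a i ^ 2) l (𝓝 0) :=
    squeeze_zero (fun a => sq_nonneg _) (fun a => (pow_two (z a i)).trans_le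
      (Finset.single_le_sum (fun j _ => mul_self_nonneg (z a j)) (Finset.mem_univ i))) h
  refine (tendsto_zero_iff_abs_tendsto_zero _).mpr ?_
  simpa only [Function.comp_def, Real.sqrt_sq_eq_abs, Real.sqrt_zero] using hsq.sqrt

lemma hasDerivWithinAt_dotProduct_mulVec {Q : Matrix m m ℝ} (hQ : Q.IsSymm) {z : ℝ → m → ℝ}
    {z' : m → ℝ} {s : Set ℝ} {t : ℝ} (hz : HasDerivWithinAt z z' s t) :
    HasDerivWithinAt (fun τ => z τ ⬝ᵥ Q *ᵥ z τ) (2 * (z t ⬝ᵥ Q *ᵥ z')) s t := by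
  have hsymm : z' ⬝ᵥ Q *ᵥ z t = z t ⬝ᵥ Q *ᵥ z' := by
    rw [dotProduct_mulVec, ← mulVec_transpose, hQ.eq, dotProduct_comm]
  have hQz : HasDerivWithinAt (fun τ => Q *ᵥ z τ) (Q *ᵥ z') s t :=
    (Q.mulVecLin.toContinuousLinearMap.hasFDerivAt (x := z t)).comp_hasDerivWithinAt t hz
  have hsum := HasDerivWithinAt.fun_sum (u := Finset.univ) fun i _ =>
    (hasDerivWithinAt_pi.mp hz i).mul (hasDerivWithinAt_pi.mp hQz i)
  refine hsum.congr_deriv ?_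
  rw [Finset.sum_add_distrib, two_mul]
  exact congrArg (· + _) hsymm

lemma le_mul_exp_of_hasDerivWithinAt_le {f f' : ℝ → ℝ} {K a t : ℝ}
    (hf : ContinuousOn f (Icc a t))
    (hf' : ∀ s ∈ Ico a t, HasDerivWithinAt f (f' s) (Ici s) s)
    (hle : ∀ s ∈ Ico a t, f' s ≤ K * f s) (ht : a ≤ t) :
    f t ≤ f a * Real.exp (K * (t - a)) := by
  rw [← gronwallBound_ε0]
  refine le_gronwallBound_of_liminf_deriv_right_le hf
    (fun s hs r hr => ?_) le_rfl (by simpa using hle) t (right_mem_Icc.mpr ht)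
  exact (hf' s hs).liminf_right_slope_le hr

lemma dotProduct_mulVec_le_mul_exp {Q : Matrix m m ℝ} (hQ : Q.IsSymm) {A : ℝ → Matrix m m ℝ}
    {α : ℝ} (hdecay : ∀ t, 0 ≤ t → ∀ z, 2 * (z ⬝ᵥ (Q * A t) *ᵥ z) ≤ -α * (z ⬝ᵥ Q *ᵥ z))
    {z : ℝ → m → ℝ} (hcont : ContinuousOn z (Ici 0))
    (hODE : ∀ t, 0 ≤ t → HasDerivWithinAt z (A t *ᵥ z t) (Ici t) t) {t : ℝ} (ht : 0 ≤ t) :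
    z t ⬝ᵥ Q *ᵥ z t ≤ (z 0 ⬝ᵥ Q *ᵥ z 0) * Real.exp (-α * t) := by
  have hVcont : Continuous fun y : m → ℝ => y ⬝ᵥ Q *ᵥ y := by fun_prop
  have hbound := le_mul_exp_of_hasDerivWithinAt_le (f := fun s => z s ⬝ᵥ Q *ᵥ z s) (K := -α)
    (hVcont.comp_continuousOn (hcont.mono Icc_subset_Ici_self))
    (fun s hs => hasDerivWithinAt_dotProduct_mulVec hQ (hODE s hs.1))
    (fun s hs => by simpa only [mulVec_mulVec] using hdecay s hs.1 (z s)) ht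
  simpa only [sub_zero] using hbound

end LyapunovDecay

section TrackingError

/-- The least eigenvalue of `[[2a, -1], [-1, 2g]]`; for `a = (1-γ²)kλ̄` and `g = γ` this is the
constant `μ̄` of the paper, a lower bound for the dissipation of the Lyapunov function. -/
noncomputable def dissipationRate (a g : ℝ) : ℝ :=
  a + g - Real.sqrt ((a - g) ^ 2 + 1)

lemma dissipationRate_pos {a g : ℝ} (hag : 0 < a + g) (h : 1 < 4 * a * g) :
    0 < dissipationRate a g := by
  refine sub_pos.mpr ((Real.sqrt_lt' hag).mpr ?_)
  linear_combination h

lemma dissipationRate_mul_le {m : Type*} [Fintype m] (a g : ℝ) (x v : m → ℝ) :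
    dissipationRate a g * (x ⬝ᵥ x + v ⬝ᵥ v) ≤
      2 * a * (x ⬝ᵥ x) - 2 * (x ⬝ᵥ v) + 2 * g * (v ⬝ᵥ v) := by
  set s := Real.sqrt ((a - g) ^ 2 + 1) with hs
  have hs_sq : s ^ 2 = (a - g) ^ 2 + 1 := Real.sq_sqrt (by positivity)
  have habs : |a - g| < s := Real.lt_sqrt_of_sq_lt (by rw [sq_abs]; exact lt_add_one _)
  have hpos : 0 < s + (a - g) := by linarith [neg_abs_le (a - g)]
  have hprod : (s + (a - g)) * (s - (a - g)) = 1 := by linear_combination hs_sq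
  rw [dissipationRate, ← hs]
  linarith [two_mul_dotProduct_le_of_mul_eq_one hpos hprod x v]

variable {m : Type*} [DecidableEq m]

/-- The matrix `F_p` of the tracking error dynamics, for `M = M_p`. -/
def trackingErrorMatrix (γ k : ℝ) (M : Matrix m m ℝ) : Matrix (m ⊕ m) (m ⊕ m) ℝ :=
  fromBlocks (-(k • M)) 1 (-((γ * k) • M)) 0

variable (m) in
/-- The matrix `P` of the common Lyapunov function `V`. -/
def lyapunovMatrix (γ : ℝ) : Matrix (m ⊕ m) (m ⊕ m) ℝ :=
  fromBlocks 1 (-(γ • 1)) (-(γ • 1)) 1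

lemma lyapunovMatrix_isSymm (γ : ℝ) : (lyapunovMatrix m γ).IsSymm := by
  simp [lyapunovMatrix, IsSymm, fromBlocks_transpose]

variable [Fintype m]

lemma lyapunovMatrix_mul_trackingErrorMatrix (γ k : ℝ) (M : Matrix m m ℝ) :
    lyapunovMatrix m γ * trackingErrorMatrix γ k M =
      fromBlocks (-(((1 - γ ^ 2) * k) • M)) 1 0 (-(γ • 1)) := by
  rw [lyapunovMatrix, trackingErrorMatrix, fromBlocks_multiply]
  congr 1 <;> simp only [mul_neg, neg_mul, mul_smul_comm, smul_mul_assoc, one_mul, mul_one,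
    mul_zero, add_zero, smul_smul, smul_neg, neg_neg] <;> module

lemma dotProduct_lyapunovMatrix_mulVec (γ : ℝ) (x v : m → ℝ) :
    Sum.elim x v ⬝ᵥ lyapunovMatrix m γ *ᵥ Sum.elim x v =
      x ⬝ᵥ x + v ⬝ᵥ v - 2 * γ * (x ⬝ᵥ v) := by
  simp only [lyapunovMatrix, fromBlocks_mulVec, Sum.elim_comp_inl, Sum.elim_comp_inr, one_mulVec,
    neg_mulVec, smul_mulVec, sumElim_dotProduct_sumElim, dotProduct_add, dotProduct_neg,
    dotProduct_smul, smul_eq_mul, dotProduct_comm v x]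
  ring

lemma one_sub_mul_dotProduct_self_le_lyapunovMatrix {γ : ℝ} (hγ : 0 ≤ γ) (w : m ⊕ m → ℝ) :
    (1 - γ) * (w ⬝ᵥ w) ≤ w ⬝ᵥ lyapunovMatrix m γ *ᵥ w := by
  obtain ⟨x, v, rfl⟩ : ∃ x v, w = Sum.elim x v := ⟨_, _, (Sum.elim_comp_inl_inr w).symm⟩
  rw [dotProduct_lyapunovMatrix_mulVec, sumElim_dotProduct_sumElim]
  linarith [mul_le_mul_of_nonneg_left
    (two_mul_dotProduct_le_of_mul_eq_one one_pos (one_mul 1) x v) hγ]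

lemma lyapunovMatrix_le_one_add_mul_dotProduct_self {γ : ℝ} (hγ : 0 ≤ γ) (w : m ⊕ m → ℝ) :
    w ⬝ᵥ lyapunovMatrix m γ *ᵥ w ≤ (1 + γ) * (w ⬝ᵥ w) := by
  obtain ⟨x, v, rfl⟩ : ∃ x v, w = Sum.elim x v := ⟨_, _, (Sum.elim_comp_inl_inr w).symm⟩
  rw [dotProduct_lyapunovMatrix_mulVec, sumElim_dotProduct_sumElim]
  have hcross := two_mul_dotProduct_le_of_mul_eq_one one_pos (one_mul 1) x (-v)
  simp only [dotProduct_neg, neg_dotProduct, neg_neg] at hcross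
  linarith [mul_le_mul_of_nonneg_left hcross hγ]

lemma two_mul_lyapunovMatrix_mul_trackingErrorMatrix_le {M : Matrix m m ℝ} {lam γ k : ℝ}
    (hM : ∀ x, lam * (x ⬝ᵥ x) ≤ x ⬝ᵥ M *ᵥ x) (hgain : 0 ≤ (1 - γ ^ 2) * k) (w : m ⊕ m → ℝ) :
    2 * (w ⬝ᵥ (lyapunovMatrix m γ * trackingErrorMatrix γ k M) *ᵥ w) ≤
      -dissipationRate ((1 - γ ^ 2) * k * lam) γ * (w ⬝ᵥ w) := by
  obtain ⟨x, v, rfl⟩ : ∃ x v, w = Sum.elim x v := ⟨_, _, (Sum.elim_comp_inl_inr w).symm⟩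
  have hform : Sum.elim x v ⬝ᵥ
        (lyapunovMatrix m γ * trackingErrorMatrix γ k M) *ᵥ Sum.elim x v =
      -((1 - γ ^ 2) * k * (x ⬝ᵥ M *ᵥ x)) + x ⬝ᵥ v - γ * (v ⬝ᵥ v) := by
    simp only [lyapunovMatrix_mul_trackingErrorMatrix, fromBlocks_mulVec, Sum.elim_comp_inl,
      Sum.elim_comp_inr, one_mulVec, zero_mulVec, zero_add, neg_mulVec, smul_mulVec,
      sumElim_dotProduct_sumElim, dotProduct_add, dotProduct_neg, dotProduct_smul, smul_eq_mul]
    ring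
  rw [hform, sumElim_dotProduct_sumElim]
  linarith [mul_le_mul_of_nonneg_left (hM x) hgain,
    dissipationRate_mul_le ((1 - γ ^ 2) * k * lam) γ x v]

lemma two_mul_lyapunovMatrix_mul_trackingErrorMatrix_le_lyapunovMatrix {M : Matrix m m ℝ}
    {lam γ k : ℝ} (hM : ∀ x, lam * (x ⬝ᵥ x) ≤ x ⬝ᵥ M *ᵥ x) (hgain : 0 ≤ (1 - γ ^ 2) * k)
    (hγ : 0 ≤ γ) (hμ : 0 ≤ dissipationRate ((1 - γ ^ 2) * k * lam) γ) (w : m ⊕ m → ℝ) :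
    2 * (w ⬝ᵥ (lyapunovMatrix m γ * trackingErrorMatrix γ k M) *ᵥ w) ≤
      -(dissipationRate ((1 - γ ^ 2) * k * lam) γ / (1 + γ)) *
        (w ⬝ᵥ lyapunovMatrix m γ *ᵥ w) := by
  set μ := dissipationRate ((1 - γ ^ 2) * k * lam) γ
  calc 2 * (w ⬝ᵥ (lyapunovMatrix m γ * trackingErrorMatrix γ k M) *ᵥ w)
      ≤ -μ * (w ⬝ᵥ w) := two_mul_lyapunovMatrix_mul_trackingErrorMatrix_le hM hgain w
    _ = -(μ / (1 + γ)) * ((1 + γ) * (w ⬝ᵥ w)) := by field_simp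
    _ ≤ -(μ / (1 + γ)) * (w ⬝ᵥ lyapunovMatrix m γ *ᵥ w) :=
        mul_le_mul_of_nonpos_left (lyapunovMatrix_le_one_add_mul_dotProduct_self hγ w)
          (neg_nonpos.mpr (by positivity))

variable {d : Type*} [Fintype d] [DecidableEq d]

/-- The common Lyapunov function `V(z) = zᵀ(P ⊗ I)z`, with the agents moving in `ℝᵈ`. -/
def lyapunovFunction (γ : ℝ) (z : (m ⊕ m) × d → ℝ) : ℝ :=
  z ⬝ᵥ (lyapunovMatrix m γ ⊗ₖ (1 : Matrix d d ℝ)) *ᵥ z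

lemma one_sub_mul_dotProduct_self_le_lyapunovFunction {γ : ℝ} (hγ : 0 ≤ γ)
    (z : (m ⊕ m) × d → ℝ) : (1 - γ) * (z ⬝ᵥ z) ≤ lyapunovFunction γ z := by
  simpa only [one_kronecker_one, one_mulVec, one_mul, lyapunovFunction] using
    mul_dotProduct_kronecker_one_mulVec_le (A := 1) (b := 1)
      (by simpa only [one_mulVec, one_mul] using
        one_sub_mul_dotProduct_self_le_lyapunovMatrix hγ) z

lemma lyapunovFunction_le_mul_exp {M : ℝ → Matrix m m ℝ} {lam γ k : ℝ}
    (hM : ∀ t, 0 ≤ t → ∀ x, lam * (x ⬝ᵥ x) ≤ x ⬝ᵥ M t *ᵥ x) (hgain : 0 ≤ (1 - γ ^ 2) * k)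
    (hγ : 0 ≤ γ) (hμ : 0 ≤ dissipationRate ((1 - γ ^ 2) * k * lam) γ)
    {ε : ℝ → (m ⊕ m) × d → ℝ} (hcont : ContinuousOn ε (Ici 0))
    (hODE : ∀ t, 0 ≤ t → HasDerivWithinAt ε
      ((trackingErrorMatrix γ k (M t) ⊗ₖ (1 : Matrix d d ℝ)) *ᵥ ε t) (Ici t) t)
    {t : ℝ} (ht : 0 ≤ t) :
    lyapunovFunction γ (ε t) ≤ lyapunovFunction γ (ε 0) *
      Real.exp (-(dissipationRate ((1 - γ ^ 2) * k * lam) γ / (1 + γ)) * t) := by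
  have hsymm : (lyapunovMatrix m γ ⊗ₖ (1 : Matrix d d ℝ)).IsSymm := by
    rw [IsSymm, ← kroneckerMap_transpose, (lyapunovMatrix_isSymm γ).eq, transpose_one]
  refine dotProduct_mulVec_le_mul_exp hsymm (fun s hs z => ?_) hcont hODE ht
  rw [← mul_kronecker_mul, one_mul]
  exact mul_dotProduct_kronecker_one_mulVec_le
    (two_mul_lyapunovMatrix_mul_trackingErrorMatrix_le_lyapunovMatrix (hM s hs) hgain hγ hμ) z

lemma dissipationRate_pos_of_gain_gt {lam γ k : ℝ} (hlam : 0 < lam) (hγ0 : 0 < γ) (hγ1 : γ < 1)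
    (hk : 1 / (4 * γ * (1 - γ ^ 2) * lam) < k) :
    0 < dissipationRate ((1 - γ ^ 2) * k * lam) γ := by
  have hγ2 : 0 < 1 - γ ^ 2 := by nlinarith
  have hk0 : 0 < k := lt_trans (by positivity) hk
  rw [div_lt_iff₀ (by positivity)] at hk
  exact dissipationRate_pos (by positivity) (by linarith)

/-- `M t` stands for `M_{σ(t)}`; right derivatives allow `ε` to have corners at the switching
times. -/
theorem tracking_error_convergence_connected_general {M : ℝ → Matrix m m ℝ} {lam γ k β : ℝ}
    (hlam : 0 < lam) (hM : ∀ t, 0 ≤ t → ∀ x, lam * (x ⬝ᵥ x) ≤ x ⬝ᵥ M t *ᵥ x)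
    (hγ0 : 0 < γ) (hγ1 : γ < 1) (hk : 1 / (4 * γ * (1 - γ ^ 2) * lam) < k)
    (hβ : β ≤ dissipationRate ((1 - γ ^ 2) * k * lam) γ / (1 + γ))
    {ε : ℝ → (m ⊕ m) × d → ℝ} (hcont : ContinuousOn ε (Ici 0))
    (hODE : ∀ t, 0 ≤ t → HasDerivWithinAt ε
      ((trackingErrorMatrix γ k (M t) ⊗ₖ (1 : Matrix d d ℝ)) *ᵥ ε t) (Ici t) t) :
    (∀ t, 0 ≤ t → ε t ⬝ᵥ ε t ≤ lyapunovFunction γ (ε 0) / (1 - γ) * Real.exp (-β * t)) ∧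
      Tendsto ε atTop (𝓝 0) := by
  set μ := dissipationRate ((1 - γ ^ 2) * k * lam) γ
  have hμ_pos : 0 < μ := dissipationRate_pos_of_gain_gt hlam hγ0 hγ1 hk
  have hγ2 : 0 < 1 - γ ^ 2 := by nlinarith
  have hgain : 0 ≤ (1 - γ ^ 2) * k := mul_nonneg hγ2.le (le_trans (by positivity) hk.le)
  have hγ' : 0 < 1 - γ := sub_pos.mpr hγ1
  have hV_nonneg : 0 ≤ lyapunovFunction γ (ε 0) :=
    (mul_nonneg hγ'.le (dotProduct_self_nonneg _)).trans
      (one_sub_mul_dotProduct_self_le_lyapunovFunction hγ0.le _)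
  have hdecay : ∀ t, 0 ≤ t → ε t ⬝ᵥ ε t ≤
      lyapunovFunction γ (ε 0) / (1 - γ) * Real.exp (-(μ / (1 + γ)) * t) := by
    intro t ht
    rw [div_mul_eq_mul_div, le_div_iff₀' hγ']
    exact (one_sub_mul_dotProduct_self_le_lyapunovFunction hγ0.le (ε t)).trans
      (lyapunovFunction_le_mul_exp hM hgain hγ0.le hμ_pos.le hcont hODE ht)
  refine ⟨fun t ht => (hdecay t ht).trans (by gcongr), ?_⟩
  have hexp : Tendsto (fun t => Real.exp (-(μ / (1 + γ)) * t)) atTop (𝓝 0) :=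
    Real.tendsto_exp_atBot.comp
      (tendsto_id.const_mul_atTop_of_neg (neg_neg_of_pos (by positivity)))
  refine tendsto_zero_of_dotProduct_self_tendsto_zero <|
    squeeze_zero' (.of_forall fun t => dotProduct_self_nonneg (ε t))
      ((eventually_ge_atTop 0).mono hdecay) ?_
  simpa only [mul_zero] using hexp.const_mul (lyapunovFunction γ (ε 0) / (1 - γ))

end TrackingError

/-- second conclusion of Theorem 1 of the paper. Under the hypotheses of
Theorem 1 with `δ(t) ≡ 0` (the leader's input is exactly known), the error
`ε : [0,∞) → ℝ^{4n}` of `ε̇ = (F_{σ(t)} ⊗ I₂)ε` satisfies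
`‖ε(t)‖² ≤ (V(ε(0))/(1-γ)) e^{-βt}` for all `t ≥ 0`, and `ε(t) → 0` as `t → ∞`,
where `V(z) = zᵀ(P ⊗ I₂)z`, `P = [[I, -γI],[-γI, I]]`, `β = μ̄/(2(1+γ))`,
`μ̄ = (1-γ²)kλ̄ + γ - √(((1-γ²)kλ̄-γ)²+1)`. Here `z ⬝ᵥ z = ‖z‖²`. -/
theorem tracking_error_convergence_connected {n : ℕ} (hn : 1 ≤ n)
    {ι : Type} [Fintype ι]
    (M : ι → Matrix (Fin n) (Fin n) ℝ)
    (hM : ∀ p, (M p).PosDef)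
    (lam : ℝ) (hlam : 0 < lam)
    (heig : ∀ p i, lam ≤ (hM p).1.eigenvalues i)
    (γ k : ℝ) (hγ0 : 0 < γ) (hγ1 : γ < 1)
    (hk : 1 / (4 * γ * (1 - γ ^ 2) * lam) < k)
    (μ β : ℝ)
    (hμ : μ = (1 - γ ^ 2) * k * lam + γ -
      Real.sqrt (((1 - γ ^ 2) * k * lam - γ) ^ 2 + 1))
    (hβ : β = μ / (2 * (1 + γ)))
    (σ : ℝ → ι)
    (F : ι → Matrix (Fin n ⊕ Fin n) (Fin n ⊕ Fin n) ℝ)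
    (hF : ∀ p, F p = Matrix.fromBlocks (-(k • M p))
      (1 : Matrix (Fin n) (Fin n) ℝ) (-((γ * k) • M p)) 0)
    (ε : ℝ → ((Fin n ⊕ Fin n) × Fin 2) → ℝ)
    (hODE : ∀ t, 0 ≤ t → HasDerivAt ε
      (((F (σ t)) ⊗ₖ (1 : Matrix (Fin 2) (Fin 2) ℝ)).mulVec (ε t)) t)
    (P : Matrix (Fin n ⊕ Fin n) (Fin n ⊕ Fin n) ℝ)
    (hP : P = Matrix.fromBlocks (1 : Matrix (Fin n) (Fin n) ℝ)
      (-(γ • (1 : Matrix (Fin n) (Fin n) ℝ)))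
      (-(γ • (1 : Matrix (Fin n) (Fin n) ℝ))) 1)
    (V : (((Fin n ⊕ Fin n) × Fin 2) → ℝ) → ℝ)
    (hV : ∀ z, V z = z ⬝ᵥ (P ⊗ₖ (1 : Matrix (Fin 2) (Fin 2) ℝ)).mulVec z) :
    (∀ t, 0 ≤ t →
      ε t ⬝ᵥ ε t ≤ (V (ε 0) / (1 - γ)) * Real.exp (-β * t)) ∧
    Filter.Tendsto ε Filter.atTop (nhds 0) := by
  obtain rfl := funext hF
  obtain rfl := funext hV
  subst hμ hβ hP
  exact tracking_error_convergence_connected_general hlam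
    (fun t _ => mul_dotProduct_self_le_of_le_eigenvalues (hM (σ t)).1 (heig (σ t))) hγ0 hγ1 hk
    (div_le_div_of_nonneg_left (dissipationRate_pos_of_gain_gt hlam hγ0 hγ1 hk).le
      (by positivity) (by linarith))
    (fun t ht => (hODE t ht).continuousAt.continuousWithinAt)
    (fun t ht => (hODE t ht).hasDerivWithinAt)
end

section
/- Let n ≥ 1 and let 𝒫 = 𝒫_c ∪ 𝒫_d be a finite index set, where for each p ∈ 𝒫_c the matrix M_p ∈ ℝ^{n×n} is symmetric positive definite with all eigenvalues ≥ λ̄ > 0, and for each p ∈ 𝒫_d the matrix M_p is symmetric positive semidefinite. Fix 0 < γ < 1 and k > 1/(4γ(1−γ²)λ̄); set μ̄ = (1−γ²)kλ̄ + γ − √(((1−γ²)kλ̄ − γ)² + 1), β = μ̄/(2(1+γ)), and α = 2(√(1+γ²) − γ)/(1−γ). Let σ : [0,∞) → 𝒫 be piecewise constant with dwell time τ > 0 (every maximal interval on which σ is constant has length ≥ τ). Let T > 0, T^c ∈ (0, T], T^d = T − T^c, and suppose that on every window [jT, (j+1)T), j = 0,1,2,…, the total length of the subintervals on which σ(t)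 ∈ 𝒫_c is at least T^c, the total length of those on which σ(t) ∈ 𝒫_d is at most T^d, and βT^c > α(T − T^c). Let δ̄ ≥ 0, δ : [0,∞) → ℝ² with ‖δ(t)‖ ≤ δ̄, and let ε : [0,∞) → ℝ^{4n} be continuous, piecewise differentiable, and satisfy ε̇(t) = (F_{σ(t)} ⊗ I₂)ε(t) + g(t) at every non-switching time, where F_p = [[−kM_p, Iₙ],[−γkM_p, 0]] and g(t) = (0, −𝟏ₙ ⊗ δ(t)). Then there exists a constant C ≥ 0, depending only on n, γ, k, λ̄, α, β, T, T^c and τ and proportional to δ̄, such that limsup_{t→∞} ‖ε(t)‖ ≤ C. -/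
open Matrix Kronecker

/-!
The quadratic form `V = ‖x‖² - 2γ⟪x, v⟫ + ‖v‖²` of the position errors `x` and the velocity errors
`v` is a Lyapunov function common to all modes. With `a = (1 - γ²) k λ̄` in a connected mode and
`a = 0` in a disconnected one, its undisturbed derivative is at most minus the value at `(x, v)` of
the quadratic form with matrix `[[2a, -1], [-1, 2γ]]`, whose smallest eigenvalue is
`a + γ - √((a - γ)² + 1)`; hence `V' ≤ -2β V` in connected modes and `V' ≤ (α / 2) V` in
disconnected ones. Young's inequality absorbs the disturbance into a constant and a small part of
the rates. The window condition then makes `V` contract, up to that constant, by a fixed factor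
over each window of length `T`, so that a geometric series bounds `limsup V`.
-/

open Set Filter MeasureTheory Real
open scoped Topology RealInnerProductSpace

section ScalarInequalities

theorem image_le_of_hasDerivWithinAt_nonpos_off_countable {f f' : ℝ → ℝ} {a b : ℝ} {S : Set ℝ}
    (hS : S.Countable) (hab : a ≤ b) (hf : ContinuousOn f (Icc a b))
    (hderiv : ∀ x ∈ Ioo a b \ S, HasDerivWithinAt f (f' x) (Ioi x) x)
    (hf' : ∀ x ∈ Ioo a b \ S, f' x ≤ 0) : f b ≤ f a := by
  by_contra! hlt
  have hab' : 0 < b - a := sub_pos.2 (hab.lt_of_ne (by rintro rfl; exact hlt.false))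
  obtain ⟨η, hη, hηlt⟩ : ∃ η > 0, η * (b - a) < f b - f a :=
    ⟨(f b - f a) / (b - a) / 2, by have := sub_pos.2 hlt; positivity, by field_simp; linarith⟩
  let g : ℝ → ℝ := fun x ↦ f x - η * (x - a)
  have hg : ContinuousOn g (Icc a b) := hf.sub (by fun_prop)
  -- A level missed by `g` on `S`: the last time `g` takes it is not exceptional.
  obtain ⟨c, hcS, hac, hcb⟩ :=
    ((hS.image g).dense_compl ℝ).exists_between (show g a < g b by simp only [g]; linarith)
  obtain ⟨x, ⟨hx, hgx⟩, hmax⟩ : ∃ x, IsGreatest (Icc a b ∩ g ⁻¹' Iic c) x :=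
    (isCompact_Icc.of_isClosed_subset (hg.preimage_isClosed_of_isClosed isClosed_Icc isClosed_Iic)
      inter_subset_left).exists_isGreatest ⟨a, left_mem_Icc.2 hab, hac.le⟩
  have hgxc : g x = c := by
    obtain ⟨y, hy, hyc⟩ :=
      intermediate_value_Icc hx.2 (hg.mono (Icc_subset_Icc_left hx.1)) ⟨hgx, hcb.le⟩
    rwa [(hmax ⟨⟨hx.1.trans hy.1, hy.2⟩, hyc.le⟩).antisymm hy.1] at hyc
  have hxab : x ∈ Ioo a b :=
    ⟨hx.1.lt_of_ne (by rintro rfl; exact hac.ne hgxc),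
      hx.2.lt_of_ne (by rintro rfl; exact hcb.ne' hgxc)⟩
  have hxS : x ∈ Ioo a b \ S := ⟨hxab, fun h ↦ hcS ⟨x, h, hgxc⟩⟩
  have hgderiv : HasDerivWithinAt g (f' x - η) (Ioi x) x := by
    simpa [g] using (hderiv x hxS).fun_sub
      (((hasDerivAt_id x).sub_const a).const_mul η).hasDerivWithinAt
  have hslope : ∀ᶠ y in 𝓝[>] x, slope g x y < 0 :=
    hgderiv.limsup_slope_le' (lt_irrefl x) (by linarith [hf' x hxS])
  obtain ⟨y, hys, hxy, hyb⟩ := (hslope.and (Ioo_mem_nhdsGT hxab.2)).exists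
  have hgy : g y < g x := by
    rw [slope_def_field, div_neg_iff] at hys
    rcases hys with h | h <;> linarith
  exact hxy.not_ge (hmax ⟨⟨hx.1.trans hxy.le, hyb.le⟩, (hgy.trans_eq hgxc).le⟩)

theorem le_exp_mul_add_integral_of_deriv_le_off_countable {V V' R r : ℝ → ℝ} {D s t : ℝ}
    {S : Set ℝ} (hS : S.Countable) (hst : s ≤ t) (hV : Continuous V) (hR : Continuous R)
    (hV' : ∀ u ∈ Ioo s t \ S, HasDerivAt V (V' u) u)
    (hR' : ∀ u ∈ Ioo s t \ S, HasDerivAt R (r u) u)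
    (hle : ∀ u ∈ Ioo s t \ S, V' u ≤ r u * V u + D) :
    V t ≤ exp (R t - R s) * V s + D * ∫ u in s..t, exp (R t - R u) := by
  let f : ℝ → ℝ := fun u ↦ exp (R t - R u) * V u - D * ∫ w in s..u, exp (R t - R w)
  have hexp : Continuous fun u ↦ exp (R t - R u) := by fun_prop
  have hint (u : ℝ) : HasDerivAt (fun u ↦ ∫ w in s..u, exp (R t - R w)) (exp (R t - R u)) u :=
    hexp.integral_hasStrictDerivAt s u |>.hasDerivAt
  have hf : Continuous f :=
    (hexp.mul hV).sub (continuous_const.mul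
      (continuous_iff_continuousAt.2 fun u ↦ (hint u).continuousAt))
  have hf' (u) (hu : u ∈ Ioo s t \ S) :
      HasDerivAt f (exp (R t - R u) * (V' u - r u * V u - D)) u :=
    ((((hR' u hu).const_sub (R t)).exp.mul (hV' u hu)).sub
      ((hint u).const_mul D)).congr_deriv (by ring)
  have key : f t ≤ f s :=
    image_le_of_hasDerivWithinAt_nonpos_off_countable hS hst hf.continuousOn
      (fun u hu ↦ (hf' u hu).hasDerivWithinAt)
      (fun u hu ↦ mul_nonpos_of_nonneg_of_nonpos (exp_pos _).le (by linarith [hle u hu]))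
  simpa [f] using key

theorem le_pow_mul_add_div_of_le_mul_add {u : ℕ → ℝ} {q E : ℝ} (hq₀ : 0 ≤ q) (hq₁ : q < 1)
    (hE : 0 ≤ E) (hu : ∀ j, u (j + 1) ≤ q * u j + E) (j : ℕ) :
    u j ≤ q ^ j * u 0 + E / (1 - q) := by
  have hq : 0 < 1 - q := sub_pos.2 hq₁
  induction j with
  | zero => simpa using div_nonneg hE hq.le
  | succ j ih =>
    calc u (j + 1) ≤ q * (q ^ j * u 0 + E / (1 - q)) + E := (hu j).trans (by gcongr)
      _ = q ^ (j + 1) * u 0 + E / (1 - q) := by field_simp; ring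

theorem limsup_sqrt_le_of_eventually_le_mul_pow_floor {f : ℝ → ℝ} {q A B T : ℝ}
    (hq₀ : 0 ≤ q) (hq₁ : q < 1) (hT : 0 < T)
    (hf : ∀ᶠ t in atTop, f t ≤ A * q ^ ⌊t / T⌋₊ + B) :
    limsup (fun t ↦ √(f t)) atTop ≤ √B := by
  have hpow : Tendsto (fun t : ℝ ↦ q ^ ⌊t / T⌋₊) atTop (𝓝 0) :=
    (tendsto_pow_atTop_nhds_zero_of_lt_one hq₀ hq₁).comp
      (tendsto_nat_floor_atTop.comp (tendsto_id.atTop_div_const hT))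
  have hlim : Tendsto (fun t : ℝ ↦ √(A * q ^ ⌊t / T⌋₊ + B)) atTop (𝓝 √B) := by
    simpa using ((hpow.const_mul A).add_const B).sqrt
  refine hlim.limsup_eq ▸ limsup_le_limsup (hf.mono fun t ht ↦ sqrt_le_sqrt ht) ?_
    hlim.isBoundedUnder_le
  exact (isBoundedUnder_of ⟨0, fun t ↦ sqrt_nonneg (f t)⟩ :
    IsBoundedUnder (· ≥ ·) atTop _).isCoboundedUnder_le

end ScalarInequalities

section OccupationTime

/-- The time spent in `C` between the instants `0` and `t`, with a minus sign when `t < 0`. -/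
noncomputable def occupationTime (C : Set ℝ) (t : ℝ) : ℝ :=
  ∫ u in 0..t, C.indicator 1 u

variable {C : Set ℝ}

theorem intervalIntegrable_indicator_one (hC : volume (frontier C) = 0) (s t : ℝ) :
    IntervalIntegrable (C.indicator (1 : ℝ → ℝ)) volume s t := by
  refine (intervalIntegrable_const (c := (1 : ℝ))).mono_fun
    (aestronglyMeasurable_one.indicator₀ ((nullMeasurableSet_of_null_frontier hC).mono_ac
      Measure.restrict_le_self.absolutelyContinuous)) (.of_forall fun u ↦ ?_)
  simpa using norm_indicator_le_norm_self (1 : ℝ → ℝ) u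

theorem occupationTime_sub_occupationTime (hC : volume (frontier C) = 0) (s t : ℝ) :
    occupationTime C t - occupationTime C s = ∫ u in s..t, C.indicator 1 u :=
  intervalIntegral.integral_interval_sub_left (intervalIntegrable_indicator_one hC _ _)
    (intervalIntegrable_indicator_one hC _ _)

theorem continuous_occupationTime (hC : volume (frontier C) = 0) :
    Continuous (occupationTime C) :=
  intervalIntegral.continuous_primitive (intervalIntegrable_indicator_one hC) 0

theorem monotone_occupationTime (hC : volume (frontier C) = 0) : Monotone (occupationTime C) := by
  intro s t hst
  rw [← sub_nonneg, occupationTime_sub_occupationTime hC]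
  exact intervalIntegral.integral_nonneg_of_forall hst fun u ↦
    indicator_nonneg (fun _ _ ↦ zero_le_one) u

theorem hasDerivAt_occupationTime (hC : volume (frontier C) = 0) {t : ℝ} (ht : t ∉ frontier C) :
    HasDerivAt (occupationTime C) (C.indicator 1 t) t :=
  intervalIntegral.integral_hasDerivAt_right (intervalIntegrable_indicator_one hC _ _)
    (aestronglyMeasurable_one.indicator₀
      (nullMeasurableSet_of_null_frontier hC)).stronglyMeasurableAtFilter
    (continuousOn_const.continuousAt_indicator ht)

theorem ofReal_occupationTime_sub (hC : volume (frontier C) = 0) {s t : ℝ} (hst : s ≤ t) :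
    ENNReal.ofReal (occupationTime C t - occupationTime C s) = volume (Ico s t ∩ C) := by
  have hCm : NullMeasurableSet C (volume.restrict (Ico s t)) :=
    (nullMeasurableSet_of_null_frontier hC).mono_ac Measure.restrict_le_self.absolutelyContinuous
  rw [occupationTime_sub_occupationTime hC, intervalIntegral.integral_of_le hst,
    ← integral_Ico_eq_integral_Ioc, integral_indicator₀ hCm, Measure.restrict_restrict₀ hCm,
    inter_comm]
  simp [Measure.real, ENNReal.ofReal_toReal
    ((measure_mono inter_subset_left).trans_lt measure_Ico_lt_top).ne]

end OccupationTime

section AveragedContraction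

/-- A constant `K` for which `V' ≤ -c V + D` during a time `Tc` of every period `T`, and
`V' ≤ d V + D` otherwise, force `limsup V ≤ K D`. -/
noncomputable def averagedGain (T Tc c d : ℝ) : ℝ :=
  (exp (d * T) / (1 - exp (d * T - (c + d) * Tc)) + 1) * (exp (d * T) * T)

theorem exp_window_lt_one {T Tc c d : ℝ} (hwin : d * (T - Tc) < c * Tc) :
    exp (d * T - (c + d) * Tc) < 1 :=
  Real.exp_lt_one_iff.2 (by linarith)

variable {C S : Set ℝ} {T Tc c d D : ℝ} {V V' : ℝ → ℝ}

theorem mul_sub_sub_mul_occupationTime_le (hC : volume (frontier C) = 0) (hd : 0 ≤ d)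
    (hcd : 0 ≤ c + d) {s t : ℝ} (hst : s ≤ t) (hts : t - s ≤ T) :
    d * (t - s) - (c + d) * (occupationTime C t - occupationTime C s) ≤ d * T := by
  have hocc := mul_nonneg hcd (sub_nonneg.2 (monotone_occupationTime hC hst))
  have hlen : d * (t - s) ≤ d * T := by gcongr
  linarith

theorem le_exp_occupationTime_mul_add (hC : (frontier C).Countable) (hS : S.Countable)
    (hd : 0 ≤ d) (hcd : 0 ≤ c + d) (hD : 0 ≤ D) (hV : Continuous V)
    (hV' : ∀ t ∈ Ioi 0 \ S, HasDerivAt V (V' t) t)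
    (hle : ∀ t ∈ Ioi 0 \ S, V' t ≤ (d - (c + d) * C.indicator 1 t) * V t + D)
    {s t : ℝ} (hs : 0 ≤ s) (hst : s ≤ t) (hts : t - s ≤ T) :
    V t ≤ exp (d * (t - s) - (c + d) * (occupationTime C t - occupationTime C s)) * V s +
      exp (d * T) * T * D := by
  have hC₀ : volume (frontier C) = 0 := hC.measure_zero volume
  let R : ℝ → ℝ := fun u ↦ d * u - (c + d) * occupationTime C u
  have hR : Continuous R := (continuous_const_mul d).sub
    (continuous_const.mul (continuous_occupationTime hC₀))
  have hR' (u) (hu : u ∉ frontier C) : HasDerivAt R (d - (c + d) * C.indicator 1 u) u := by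
    simpa using ((hasDerivAt_id u).const_mul d).fun_sub
      ((hasDerivAt_occupationTime hC₀ hu).const_mul (c + d))
  have hpos {u} (hu : u ∈ Ioo s t \ (S ∪ frontier C)) : u ∈ Ioi 0 \ S :=
    ⟨hs.trans_lt hu.1.1, fun h ↦ hu.2 (.inl h)⟩
  have hRle (u) (hu : u ∈ Icc s t) : exp (R t - R u) ≤ exp (d * T) := by
    refine exp_le_exp.2 (le_trans (le_of_eq ?_)
      (mul_sub_sub_mul_occupationTime_le hC₀ hd hcd hu.2 (by linarith [hu.1])))
    simp only [R]; ring
  have hint : ∫ u in s..t, exp (R t - R u) ≤ exp (d * T) * T :=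
    calc ∫ u in s..t, exp (R t - R u) ≤ ∫ _ in s..t, exp (d * T) :=
          intervalIntegral.integral_mono_on hst
            (Continuous.intervalIntegrable (by fun_prop) s t) intervalIntegrable_const hRle
      _ ≤ exp (d * T) * T := by
          rw [intervalIntegral.integral_const, smul_eq_mul, mul_comm]; gcongr
  calc V t ≤ exp (R t - R s) * V s + D * ∫ u in s..t, exp (R t - R u) :=
        le_exp_mul_add_integral_of_deriv_le_off_countable (hS.union hC) hst hV hR
          (fun u hu ↦ hV' u (hpos hu)) (fun u hu ↦ hR' u fun h ↦ hu.2 (.inr h))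
          (fun u hu ↦ hle u (hpos hu))
    _ ≤ exp (R t - R s) * V s + D * (exp (d * T) * T) := by gcongr
    _ = _ := by simp only [R]; ring_nf

theorem le_exp_window_mul_add (hC : (frontier C).Countable) (hS : S.Countable) (hT : 0 ≤ T)
    (hd : 0 ≤ d) (hcd : 0 ≤ c + d) (hD : 0 ≤ D) (hV : Continuous V) (hV₀ : ∀ t, 0 ≤ V t)
    (hV' : ∀ t ∈ Ioi 0 \ S, HasDerivAt V (V' t) t)
    (hle : ∀ t ∈ Ioi 0 \ S, V' t ≤ (d - (c + d) * C.indicator 1 t) * V t + D)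
    {s : ℝ} (hs : 0 ≤ s) (hocc : ENNReal.ofReal Tc ≤ volume (Ico s (s + T) ∩ C)) :
    V (s + T) ≤ exp (d * T - (c + d) * Tc) * V s + exp (d * T) * T * D := by
  have hC₀ : volume (frontier C) = 0 := hC.measure_zero volume
  have hsT : s ≤ s + T := le_add_of_nonneg_right hT
  have hTc : Tc ≤ occupationTime C (s + T) - occupationTime C s := by
    rwa [← ofReal_occupationTime_sub hC₀ hsT, ENNReal.ofReal_le_ofReal_iff
      (sub_nonneg.2 (monotone_occupationTime hC₀ hsT))] at hocc
  have hstep := le_exp_occupationTime_mul_add hC hS hd hcd hD hV hV' hle hs hsT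
    (add_sub_cancel_left s T).le
  rw [add_sub_cancel_left] at hstep
  refine hstep.trans ?_
  have := hV₀ s
  gcongr

theorem le_pow_floor_add_averagedGain_mul (hC : (frontier C).Countable) (hS : S.Countable)
    (hT : 0 < T) (hd : 0 ≤ d) (hcd : 0 ≤ c + d) (hwin : d * (T - Tc) < c * Tc)
    (hocc : ∀ j : ℕ, ENNReal.ofReal Tc ≤ volume (Ico (j * T) ((j + 1) * T) ∩ C))
    (hD : 0 ≤ D) (hV : Continuous V) (hV₀ : ∀ t, 0 ≤ V t)
    (hV' : ∀ t ∈ Ioi 0 \ S, HasDerivAt V (V' t) t)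
    (hle : ∀ t ∈ Ioi 0 \ S, V' t ≤ (d - (c + d) * C.indicator 1 t) * V t + D)
    {t : ℝ} (ht : 0 ≤ t) :
    V t ≤ exp (d * T) * V 0 * exp (d * T - (c + d) * Tc) ^ ⌊t / T⌋₊ +
      averagedGain T Tc c d * D := by
  have hC₀ : volume (frontier C) = 0 := hC.measure_zero volume
  set E : ℝ := exp (d * T) * T * D with hE
  set q : ℝ := exp (d * T - (c + d) * Tc) with hq
  have hq₁ : q < 1 := exp_window_lt_one hwin
  have hwindow (j : ℕ) : V ((j + 1 : ℕ) * T) ≤ q * V (j * T) + E := by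
    have hjT : ((j + 1 : ℕ) : ℝ) * T = j * T + T := by push_cast; ring
    rw [hjT]
    exact le_exp_window_mul_add hC hS hT.le hd hcd hD hV hV₀ hV' hle (by positivity)
      (by simpa only [add_one_mul] using hocc j)
  set j : ℕ := ⌊t / T⌋₊
  have hjt : (j : ℝ) * T ≤ t := (le_div_iff₀ hT).1 (Nat.floor_le (by positivity))
  have htj : t - j * T ≤ T := by
    linarith [(div_lt_iff₀ hT).1 (Nat.lt_floor_add_one (t / T))]
  have hV_j : V (j * T) ≤ q ^ j * V 0 + E / (1 - q) := by
    simpa using le_pow_mul_add_div_of_le_mul_add (u := fun j : ℕ ↦ V (j * T))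
      (exp_pos _).le hq₁ (by positivity) hwindow j
  have hgrowth := mul_sub_sub_mul_occupationTime_le hC₀ hd hcd hjt htj
  calc V t ≤ exp (d * T) * (q ^ j * V 0 + E / (1 - q)) + E := by
        refine (le_exp_occupationTime_mul_add hC hS hd hcd hD hV hV' hle (by positivity)
          hjt htj).trans ?_
        have := hV₀ (j * T)
        gcongr
    _ = exp (d * T) * V 0 * q ^ j + averagedGain T Tc c d * D := by
        rw [averagedGain, ← hq, hE]; ring

end AveragedContraction

section Lyapunov

variable {E : Type*} [NormedAddCommGroup E] [InnerProductSpace ℝ E]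

/-- The polar form of the paper's Lyapunov function
`‖x‖² - 2γ⟪x, v⟫ + ‖v‖² = zᵀ(P ⊗ I)z`, where `z = (x, v)` and `P = [[1, -γ], [-γ, 1]]`. -/
def lyapunovForm (γ : ℝ) (z w : E × E) : ℝ :=
  ⟪z.1, w.1⟫ - γ * (⟪z.1, w.2⟫ + ⟪z.2, w.1⟫) + ⟪z.2, w.2⟫

/-- The closed-loop vector field `(x, v) ↦ (v - k A x, -γ k A x)` of the position and velocity
errors, with `A` standing for the paper's `M_p ⊗ I₂`. -/
def trackingField (k γ : ℝ) (A : E → E) (z : E × E) : E × E :=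
  (z.2 - k • A z.1, -((γ * k) • A z.1))

theorem lyapunovForm_self (γ : ℝ) (z : E × E) :
    lyapunovForm γ z z = ‖z.1‖ ^ 2 - 2 * γ * ⟪z.1, z.2⟫ + ‖z.2‖ ^ 2 := by
  rw [lyapunovForm, real_inner_self_eq_norm_sq, real_inner_self_eq_norm_sq,
    real_inner_comm z.1 z.2]
  ring

theorem lyapunovForm_add_right (γ : ℝ) (z w w' : E × E) :
    lyapunovForm γ z (w + w') = lyapunovForm γ z w + lyapunovForm γ z w' := by
  simp only [lyapunovForm, Prod.fst_add, Prod.snd_add, inner_add_right]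
  ring

theorem one_sub_mul_le_lyapunovForm_self {γ : ℝ} (hγ : 0 ≤ γ) (z : E × E) :
    (1 - γ) * (‖z.1‖ ^ 2 + ‖z.2‖ ^ 2) ≤ lyapunovForm γ z z := by
  have := mul_nonneg hγ (sq_nonneg ‖z.1 - z.2‖)
  rw [norm_sub_sq_real] at this
  rw [lyapunovForm_self]
  linarith

theorem lyapunovForm_self_le_one_add_mul {γ : ℝ} (hγ : 0 ≤ γ) (z : E × E) :
    lyapunovForm γ z z ≤ (1 + γ) * (‖z.1‖ ^ 2 + ‖z.2‖ ^ 2) := by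
  have := mul_nonneg hγ (sq_nonneg ‖z.1 + z.2‖)
  rw [norm_add_sq_real] at this
  rw [lyapunovForm_self]
  linarith

theorem lyapunovForm_self_nonneg {γ : ℝ} (hγ₀ : 0 ≤ γ) (hγ₁ : γ ≤ 1) (z : E × E) :
    0 ≤ lyapunovForm γ z z :=
  (mul_nonneg (sub_nonneg.2 hγ₁) (by positivity)).trans (one_sub_mul_le_lyapunovForm_self hγ₀ z)

theorem two_mul_lyapunovForm_le {γ η : ℝ} (hγ₀ : 0 ≤ γ) (hγ₁ : γ ≤ 1) (hη : 0 < η)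
    (z w : E × E) :
    2 * lyapunovForm γ z w ≤ η * lyapunovForm γ z z + lyapunovForm γ w w / η := by
  have hexpand : lyapunovForm γ (η • z - w) (η • z - w) =
      η * (η * lyapunovForm γ z z + lyapunovForm γ w w / η - 2 * lyapunovForm γ z w) := by
    simp only [lyapunovForm, Prod.fst_sub, Prod.snd_sub, Prod.smul_fst, Prod.smul_snd,
      inner_sub_left, inner_sub_right, real_inner_smul_left, real_inner_smul_right,
      real_inner_comm z.1 w.1, real_inner_comm z.1 w.2, real_inner_comm z.2 w.1,
      real_inner_comm z.2 w.2]
    field_simp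
    ring
  have := lyapunovForm_self_nonneg hγ₀ hγ₁ (η • z - w)
  rw [hexpand] at this
  linarith [nonneg_of_mul_nonneg_right this hη]

theorem two_mul_lyapunovForm_add_le {γ η r G : ℝ} {z w g : E × E} (hγ₀ : 0 ≤ γ) (hγ₁ : γ ≤ 1)
    (hη : 0 < η) (hw : 2 * lyapunovForm γ z w ≤ r * lyapunovForm γ z z)
    (hg : ‖g.1‖ ^ 2 + ‖g.2‖ ^ 2 ≤ G ^ 2) :
    2 * lyapunovForm γ z (w + g) ≤ (r + η) * lyapunovForm γ z z + (1 + γ) * G ^ 2 / η := by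
  have hyoung := two_mul_lyapunovForm_le hγ₀ hγ₁ hη z g
  have hgG : lyapunovForm γ g g / η ≤ (1 + γ) * G ^ 2 / η := by
    gcongr
    exact (lyapunovForm_self_le_one_add_mul hγ₀ g).trans (by gcongr)
  rw [lyapunovForm_add_right]
  linarith

theorem hasDerivAt_lyapunovForm_self {γ : ℝ} {z : ℝ → E × E} {z' : E × E} {t : ℝ}
    (hz : HasDerivAt z z' t) :
    HasDerivAt (fun t ↦ lyapunovForm γ (z t) (z t)) (2 * lyapunovForm γ (z t) z') t := by
  have hx : HasDerivAt (fun t ↦ (z t).1) z'.1 t := hz.fst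
  have hv : HasDerivAt (fun t ↦ (z t).2) z'.2 t := hz.snd
  simp only [lyapunovForm_self]
  refine ((hx.norm_sq.sub ((hx.inner ℝ hv).const_mul (2 * γ))).add hv.norm_sq).congr_deriv ?_
  rw [lyapunovForm, real_inner_comm (z t).2 z'.1]
  ring

theorem two_mul_lyapunovForm_trackingField (k γ : ℝ) (A : E → E) (z : E × E) :
    2 * lyapunovForm γ z (trackingField k γ A z) =
      2 * ⟪z.1, z.2⟫ - 2 * γ * ‖z.2‖ ^ 2 - 2 * ((1 - γ ^ 2) * k) * ⟪z.1, A z.1⟫ := by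
  simp only [lyapunovForm, trackingField, inner_sub_right, inner_neg_right,
    real_inner_smul_right, real_inner_self_eq_norm_sq]
  ring

-- `a + b - √((a - b) ^ 2 + 1)` is the smallest eigenvalue of `[[2a, -1], [-1, 2b]]`.
theorem min_eigenvalue_mul_le (a b : ℝ) (x v : E) :
    (a + b - √((a - b) ^ 2 + 1)) * (‖x‖ ^ 2 + ‖v‖ ^ 2) ≤
      2 * a * ‖x‖ ^ 2 - 2 * ⟪x, v⟫ + 2 * b * ‖v‖ ^ 2 := by
  set s : ℝ := √((a - b) ^ 2 + 1)
  have hs : s ^ 2 = (a - b) ^ 2 + 1 := sq_sqrt (by positivity)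
  have hpos : 0 < s + (a - b) := by
    have : |a - b| < s := lt_sqrt_of_sq_lt (by rw [sq_abs]; linarith)
    linarith [neg_abs_le (a - b)]
  have hsq : ‖(s + (a - b)) • x - v‖ ^ 2 =
      (s + (a - b)) * ((s + (a - b)) * ‖x‖ ^ 2 - 2 * ⟪x, v⟫ + (s - (a - b)) * ‖v‖ ^ 2) := by
    rw [norm_sub_sq_real, norm_smul, real_inner_smul_left, mul_pow, norm_of_nonneg hpos.le]
    linear_combination - ‖v‖ ^ 2 * hs
  have := nonneg_of_mul_nonneg_right (hsq ▸ sq_nonneg _) hpos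
  linarith

theorem two_mul_lyapunovForm_trackingField_le {k γ l : ℝ} {A : E → E} {z : E × E}
    (hk : 0 ≤ k) (hγ₀ : 0 ≤ γ) (hγ₁ : γ ≤ 1) (hA : l * ‖z.1‖ ^ 2 ≤ ⟪z.1, A z.1⟫) :
    2 * lyapunovForm γ z (trackingField k γ A z) ≤
      -((1 - γ ^ 2) * k * l + γ - √(((1 - γ ^ 2) * k * l - γ) ^ 2 + 1)) *
        (‖z.1‖ ^ 2 + ‖z.2‖ ^ 2) := by
  have hgain : 0 ≤ 2 * ((1 - γ ^ 2) * k) :=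
    mul_nonneg zero_le_two (mul_nonneg (sub_nonneg.2 (pow_le_one₀ hγ₀ hγ₁)) hk)
  have hmin := min_eigenvalue_mul_le ((1 - γ ^ 2) * k * l) γ z.1 z.2
  have := mul_le_mul_of_nonneg_left hA hgain
  rw [two_mul_lyapunovForm_trackingField]
  linarith

theorem two_mul_lyapunovForm_trackingField_le_neg_mul {k γ lam μ β : ℝ} {A : E → E} {z : E × E}
    (hk : 0 ≤ k) (hγ₀ : 0 ≤ γ) (hγ₁ : γ ≤ 1)
    (hμ : μ = (1 - γ ^ 2) * k * lam + γ - √(((1 - γ ^ 2) * k * lam - γ) ^ 2 + 1))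
    (hβ : β = μ / (2 * (1 + γ))) (hβ₀ : 0 ≤ β) (hA : lam * ‖z.1‖ ^ 2 ≤ ⟪z.1, A z.1⟫) :
    2 * lyapunovForm γ z (trackingField k γ A z) ≤ -(2 * β) * lyapunovForm γ z z := by
  have hμβ : μ = 2 * β * (1 + γ) := by rw [hβ]; field_simp
  have hV := mul_le_mul_of_nonneg_left (lyapunovForm_self_le_one_add_mul hγ₀ z)
    (mul_nonneg zero_le_two hβ₀)
  have hdrift := two_mul_lyapunovForm_trackingField_le hk hγ₀ hγ₁ hA
  rw [← hμ, hμβ] at hdrift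
  linarith

theorem two_mul_lyapunovForm_trackingField_le_mul {k γ α : ℝ} {A : E → E} {z : E × E}
    (hk : 0 ≤ k) (hγ₀ : 0 ≤ γ) (hγ₁ : γ < 1)
    (hα : α = 2 * (√(1 + γ ^ 2) - γ) / (1 - γ)) (hα₀ : 0 ≤ α) (hA : 0 ≤ ⟪z.1, A z.1⟫) :
    2 * lyapunovForm γ z (trackingField k γ A z) ≤ α / 2 * lyapunovForm γ z z := by
  have hαγ : α / 2 * (1 - γ) = √(1 + γ ^ 2) - γ := by
    have := (sub_pos.2 hγ₁).ne'
    rw [hα]; field_simp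
  have hV := mul_le_mul_of_nonneg_left (one_sub_mul_le_lyapunovForm_self hγ₀ z)
    (div_nonneg hα₀ zero_le_two)
  have hdrift := two_mul_lyapunovForm_trackingField_le (l := 0) hk hγ₀ hγ₁.le (by simpa using hA)
  have hsqrt : ((1 - γ ^ 2) * k * 0 - γ) ^ 2 + 1 = 1 + γ ^ 2 := by ring
  rw [hsqrt] at hdrift
  rw [← mul_assoc, hαγ] at hV
  linarith

theorem growthRate_pos {γ α : ℝ} (hγ₁ : γ < 1)
    (hα : α = 2 * (√(1 + γ ^ 2) - γ) / (1 - γ)) : 0 < α := by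
  have hsqrt : γ < √(1 + γ ^ 2) := lt_sqrt_of_sq_lt (by linarith)
  rw [hα]
  exact div_pos (mul_pos two_pos (sub_pos.2 hsqrt)) (sub_pos.2 hγ₁)

end Lyapunov

section SwitchedSystem

variable {ι : Type*} {P : Set ι} {σ : ℝ → ι} {S : Set ℝ}

theorem countable_frontier_Ici_inter_preimage (hS : S.Countable)
    (hσ : ∀ t ∈ Ioi 0 \ S, ∀ᶠ s in 𝓝 t, σ s = σ t) : (frontier (Ici 0 ∩ σ ⁻¹' P)).Countable := by
  refine (hS.insert 0).mono fun t ht ↦ ?_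
  by_contra! htS
  obtain ⟨ht₀, htS⟩ := not_or.1 htS
  rcases lt_or_gt_of_ne ht₀ with hneg | hpos
  · have hle : t ∈ Ici (0 : ℝ) := closure_minimal inter_subset_left isClosed_Ici ht.1
    exact hneg.not_ge hle
  · have hconst : ∀ᶠ s in 𝓝 t, s ∈ Ici 0 ∩ σ ⁻¹' P ↔ σ t ∈ P := by
      filter_upwards [hσ t ⟨hpos, htS⟩, lt_mem_nhds hpos] with s hs hs₀
      simp [hs, hs₀.le]
    by_cases htP : σ t ∈ P
    · exact ht.2 (mem_interior_iff_mem_nhds.2 (hconst.mono fun s hs ↦ hs.2 htP))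
    · obtain ⟨s, hsC, hs⟩ := (mem_closure_iff_frequently.1 ht.1).and_eventually hconst |>.exists
      exact htP (hs.1 hsC)

theorem eventually_eq_of_eq_on_Ico {ts : ℕ → ℝ} (htop : Tendsto ts atTop atTop)
    (hσ : ∀ i, ∀ s ∈ Ico (ts i) (ts (i + 1)), σ s = σ (ts i)) {t : ℝ}
    (ht : t ∈ Ioi (ts 0) \ range ts) : ∀ᶠ s in 𝓝 t, σ s = σ t := by
  obtain ⟨m, hm⟩ := (htop.eventually_gt_atTop t).exists
  obtain ⟨i, -, hi⟩ := mem_iUnion₂.1 (Ico_subset_biUnion_Ico m ts ⟨ht.1.le, hm⟩)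
  filter_upwards [Ioo_mem_nhds (hi.1.lt_of_ne fun h ↦ ht.2 ⟨i, h⟩) hi.2] with s hs
  rw [hσ i s ⟨hs.1.le, hs.2⟩, hσ i t hi]

variable {E : Type*} [NormedAddCommGroup E] [InnerProductSpace ℝ E]

/-- Half of the averaged decay rate left over by decay at rate `c` during a time `Tc` of every
period `T` and growth at rate `d` otherwise: the part spent on absorbing a disturbance. -/
noncomputable def decayMargin (T Tc c d : ℝ) : ℝ :=
  (c * Tc - d * (T - Tc)) / (2 * T)

/-- The ratio between the asymptotic tracking error and the size of the disturbance, when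
`lyapunovForm γ` decays at rate `c` during a time `Tc` of every period `T` and grows at rate at
most `d` otherwise. -/
noncomputable def trackingGain (γ T Tc c d : ℝ) : ℝ :=
  √(averagedGain T Tc (c - decayMargin T Tc c d) (d + decayMargin T Tc c d) *
    ((1 + γ) / decayMargin T Tc c d) / (1 - γ))

variable {T Tc c d γ G : ℝ}

theorem decayMargin_pos (hT : 0 < T) (hwin : d * (T - Tc) < c * Tc) : 0 < decayMargin T Tc c d :=
  div_pos (sub_pos.2 hwin) (by positivity)

theorem add_decayMargin_mul_lt (hT : 0 < T) (hwin : d * (T - Tc) < c * Tc) :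
    (d + decayMargin T Tc c d) * (T - Tc) < (c - decayMargin T Tc c d) * Tc := by
  have hmargin : 2 * (decayMargin T Tc c d * T) = c * Tc - d * (T - Tc) := by
    rw [decayMargin]; field_simp
  linarith

theorem trackingGain_mul (hG : 0 ≤ G) :
    trackingGain γ T Tc c d * G =
      √(averagedGain T Tc (c - decayMargin T Tc c d) (d + decayMargin T Tc c d) *
        ((1 + γ) * G ^ 2 / decayMargin T Tc c d) / (1 - γ)) := by
  nth_rw 1 [trackingGain, ← sqrt_sq hG]
  rw [← sqrt_mul' _ (sq_nonneg G)]
  congr 1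
  ring

theorem limsup_sqrt_norm_sq_le_trackingGain_mul {F : ι → E × E → E × E} {z g : ℝ → E × E}
    (hγ₀ : 0 ≤ γ) (hγ₁ : γ < 1) (hc : 0 ≤ c) (hd : 0 ≤ d) (hG : 0 ≤ G)
    (hT : 0 < T) (hwin : d * (T - Tc) < c * Tc) (hS : S.Countable)
    (hσ : ∀ t ∈ Ioi 0 \ S, ∀ᶠ s in 𝓝 t, σ s = σ t)
    (hocc : ∀ j : ℕ, ENNReal.ofReal Tc ≤ volume (Ico (j * T) ((j + 1) * T) ∩ σ ⁻¹' P))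
    (hdecay : ∀ p ∈ P, ∀ w, 2 * lyapunovForm γ w (F p w) ≤ -c * lyapunovForm γ w w)
    (hgrowth : ∀ p ∉ P, ∀ w, 2 * lyapunovForm γ w (F p w) ≤ d * lyapunovForm γ w w)
    (hg : ∀ t ∈ Ioi 0 \ S, ‖(g t).1‖ ^ 2 + ‖(g t).2‖ ^ 2 ≤ G ^ 2) (hz : Continuous z)
    (hz' : ∀ t ∈ Ioi 0 \ S, HasDerivAt z (F (σ t) (z t) + g t) t) :
    limsup (fun t ↦ √(‖(z t).1‖ ^ 2 + ‖(z t).2‖ ^ 2)) atTop ≤ trackingGain γ T Tc c d * G := by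
  have hη : 0 < decayMargin T Tc c d := decayMargin_pos hT hwin
  have hwin' := add_decayMargin_mul_lt hT hwin
  rw [trackingGain_mul hG]
  set η : ℝ := decayMargin T Tc c d
  let C : Set ℝ := Ici 0 ∩ σ ⁻¹' P
  let V : ℝ → ℝ := fun t ↦ lyapunovForm γ (z t) (z t)
  have hV : Continuous V := by simp only [V, lyapunovForm]; fun_prop
  have hoccC (j : ℕ) : ENNReal.ofReal Tc ≤ volume (Ico (j * T) ((j + 1) * T) ∩ C) := by
    have hnonneg : Ico (j * T) ((j + 1) * T) ⊆ Ici 0 := fun s hs ↦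
      mem_Ici.2 (le_trans (by positivity) hs.1)
    simpa only [C, ← inter_assoc, inter_eq_left.2 hnonneg] using hocc j
  have hrate (t) (ht : t ∈ Ioi 0 \ S) : 2 * lyapunovForm γ (z t) (F (σ t) (z t)) ≤
      (d - (c + d) * C.indicator 1 t) * V t := by
    by_cases htP : σ t ∈ P
    · have htC : t ∈ C := ⟨mem_Ici.2 (le_of_lt ht.1), htP⟩
      simpa [htC] using hdecay _ htP (z t)
    · have htC : t ∉ C := fun h ↦ htP h.2
      simpa [htC] using hgrowth _ htP (z t)
  have hdrift (t) (ht : t ∈ Ioi 0 \ S) : 2 * lyapunovForm γ (z t) (F (σ t) (z t) + g t) ≤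
      (d + η - (c - η + (d + η)) * C.indicator 1 t) * V t + (1 + γ) * G ^ 2 / η := by
    refine (two_mul_lyapunovForm_add_le hγ₀ hγ₁.le hη (hrate t ht) (hg t ht)).trans_eq ?_
    ring
  have hbound {t : ℝ} (ht : 0 ≤ t) :=
    le_pow_floor_add_averagedGain_mul (countable_frontier_Ici_inter_preimage hS hσ) hS hT
      (by positivity) (by linarith) hwin' hoccC (by positivity) hV
      (fun t ↦ lyapunovForm_self_nonneg hγ₀ hγ₁.le (z t))
      (fun t ht ↦ hasDerivAt_lyapunovForm_self (hz' t ht)) hdrift ht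
  have hγ : 0 < 1 - γ := sub_pos.2 hγ₁
  refine limsup_sqrt_le_of_eventually_le_mul_pow_floor
    (A := exp ((d + η) * T) * V 0 / (1 - γ)) (exp_pos _).le (exp_window_lt_one hwin') hT
    ((eventually_ge_atTop 0).mono fun t ht ↦ ?_)
  rw [div_mul_eq_mul_div, ← add_div, le_div_iff₀' hγ]
  exact (one_sub_mul_le_lyapunovForm_self hγ₀ (z t)).trans (hbound ht)

end SwitchedSystem

section Matrices

variable {N D : Type*} [Fintype N] [Fintype D]

theorem mul_dotProduct_self_le_of_le_eigenvalues_s11 [DecidableEq N] {M : Matrix N N ℝ}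
    (hM : M.IsHermitian) {l : ℝ} (hl : ∀ i, l ≤ hM.eigenvalues i) (x : N → ℝ) :
    l * (x ⬝ᵥ x) ≤ x ⬝ᵥ M *ᵥ x := by
  open scoped MatrixOrder in
  have hle : algebraMap ℝ (Matrix N N ℝ) l ≤ M := by
    refine algebraMap_le_of_le_spectrum (fun y hy ↦ ?_) hM.isSelfAdjoint
    rw [hM.spectrum_real_eq_range_eigenvalues] at hy
    obtain ⟨i, rfl⟩ := hy
    exact hl i
  have hpos := (Matrix.le_iff.1 hle).dotProduct_mulVec_nonneg x
  rw [Algebra.algebraMap_eq_smul_one, sub_mulVec, smul_mulVec, one_mulVec, dotProduct_sub,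
    dotProduct_smul, star_trivial, smul_eq_mul] at hpos
  linarith

theorem mul_norm_sq_le_inner_toEuclideanLin_kronecker_one [DecidableEq N] [DecidableEq D]
    {M : Matrix N N ℝ} {l : ℝ} (hM : ∀ x : N → ℝ, l * (x ⬝ᵥ x) ≤ x ⬝ᵥ M *ᵥ x)
    (y : EuclideanSpace ℝ (N × D)) :
    l * ‖y‖ ^ 2 ≤ ⟪y, toEuclideanLin (M ⊗ₖ (1 : Matrix D D ℝ)) y⟫ := by
  calc l * ‖y‖ ^ 2 = ∑ q, l * ((fun i ↦ y (i, q)) ⬝ᵥ fun i ↦ y (i, q)) := by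
        rw [EuclideanSpace.real_norm_sq_eq, Fintype.sum_prod_type_right, Finset.mul_sum]
        simp only [dotProduct, pow_two]
    _ ≤ ∑ q, (fun i ↦ y (i, q)) ⬝ᵥ M *ᵥ fun i ↦ y (i, q) :=
        Finset.sum_le_sum fun q _ ↦ hM _
    _ = ⟪y, toEuclideanLin (M ⊗ₖ (1 : Matrix D D ℝ)) y⟫ := by
        simp [PiLp.inner_apply, toLpLin_apply, Fintype.sum_prod_type_right, mulVec, dotProduct,
          Matrix.one_apply, mul_comm]

/-- The paper's system matrix `F_p = [[-k M, I], [-γ k M, 0]]`. -/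
def errorMatrix [DecidableEq N] (k γ : ℝ) (M : Matrix N N ℝ) : Matrix (N ⊕ N) (N ⊕ N) ℝ :=
  fromBlocks (-(k • M)) 1 (-((γ * k) • M)) 0

/-- The pair of Euclidean vectors (position errors, velocity errors) stacked in an error vector. -/
noncomputable def unstack :
    ((N ⊕ N) × D → ℝ) →L[ℝ] EuclideanSpace ℝ (N × D) × EuclideanSpace ℝ (N × D) :=
  LinearMap.toContinuousLinearMap
    { toFun := fun ε ↦
        (WithLp.toLp 2 fun z ↦ ε (.inl z.1, z.2), WithLp.toLp 2 fun z ↦ ε (.inr z.1, z.2))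
      map_add' := fun _ _ ↦ rfl
      map_smul' := fun _ _ ↦ rfl }

theorem unstack_fst_apply (ε : (N ⊕ N) × D → ℝ) (z : N × D) :
    (unstack ε).1 z = ε (.inl z.1, z.2) :=
  rfl

theorem unstack_snd_apply (ε : (N ⊕ N) × D → ℝ) (z : N × D) :
    (unstack ε).2 z = ε (.inr z.1, z.2) :=
  rfl

theorem norm_sq_add_norm_sq_unstack (ε : (N ⊕ N) × D → ℝ) :
    ‖(unstack ε).1‖ ^ 2 + ‖(unstack ε).2‖ ^ 2 = ε ⬝ᵥ ε := by
  rw [EuclideanSpace.real_norm_sq_eq, EuclideanSpace.real_norm_sq_eq]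
  simp only [unstack_fst_apply, unstack_snd_apply, dotProduct, Fintype.sum_prod_type,
    Fintype.sum_sum_type, pow_two]

theorem unstack_errorMatrix_mulVec [DecidableEq N] [DecidableEq D] (k γ : ℝ) (M : Matrix N N ℝ)
    (ε : (N ⊕ N) × D → ℝ) :
    unstack ((errorMatrix k γ M ⊗ₖ (1 : Matrix D D ℝ)) *ᵥ ε) =
      trackingField k γ (toEuclideanLin (M ⊗ₖ (1 : Matrix D D ℝ))) (unstack ε) := by
  ext ⟨i, q⟩ <;>
  simp [unstack_fst_apply, unstack_snd_apply, trackingField, errorMatrix, mulVec, dotProduct,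
    Fintype.sum_prod_type, Matrix.one_apply, Finset.mul_sum, mul_assoc, toLpLin_apply,
    neg_add_eq_sub]

end Matrices

section TrackingError

variable {N D ι : Type*} [Fintype N] [Fintype D]

theorem tracking_error_bound_jointly_connected_general [DecidableEq N] [DecidableEq D]
    {lam γ k T Tc μ β α gbar : ℝ} (hγ₀ : 0 ≤ γ) (hγ₁ : γ < 1) (hk : 0 ≤ k)
    (hT : 0 < T) (hTc₀ : 0 < Tc) (hTcT : Tc ≤ T) (hgbar : 0 ≤ gbar)
    (hμ : μ = (1 - γ ^ 2) * k * lam + γ - √(((1 - γ ^ 2) * k * lam - γ) ^ 2 + 1))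
    (hβ : β = μ / (2 * (1 + γ))) (hα : α = 2 * (√(1 + γ ^ 2) - γ) / (1 - γ))
    (hwin : α * (T - Tc) < 4 * β * Tc)
    {P : Set ι} {M : ι → Matrix N N ℝ}
    (hMc : ∀ p ∈ P, ∀ x : N → ℝ, lam * (x ⬝ᵥ x) ≤ x ⬝ᵥ M p *ᵥ x)
    (hMd : ∀ p ∉ P, ∀ x : N → ℝ, 0 ≤ x ⬝ᵥ M p *ᵥ x)
    {S : Set ℝ} {σ : ℝ → ι} (hS : S.Countable)
    (hσ : ∀ t ∈ Ioi 0 \ S, ∀ᶠ s in 𝓝 t, σ s = σ t)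
    (hocc : ∀ j : ℕ, ENNReal.ofReal Tc ≤ volume (Ico (j * T) ((j + 1) * T) ∩ σ ⁻¹' P))
    {ε g : ℝ → (N ⊕ N) × D → ℝ} (hg : ∀ t ∈ Ioi 0 \ S, g t ⬝ᵥ g t ≤ gbar ^ 2)
    (hε : Continuous ε)
    (hε' : ∀ t ∈ Ioi 0 \ S,
      HasDerivAt ε ((errorMatrix k γ (M (σ t)) ⊗ₖ (1 : Matrix D D ℝ)) *ᵥ ε t + g t) t) :
    limsup (fun t ↦ √(ε t ⬝ᵥ ε t)) atTop ≤ trackingGain γ T Tc (2 * β) (α / 2) * gbar := by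
  have hα₀ : 0 < α := growthRate_pos hγ₁ hα
  have hβ₀ : 0 < β := by
    have : 0 < 4 * β * Tc := (mul_nonneg hα₀.le (sub_nonneg.2 hTcT)).trans_lt hwin
    linarith [pos_of_mul_pos_left this hTc₀.le]
  simp only [← norm_sq_add_norm_sq_unstack] at hg ⊢
  refine limsup_sqrt_norm_sq_le_trackingGain_mul
    (F := fun p ↦ trackingField k γ (toEuclideanLin (M p ⊗ₖ (1 : Matrix D D ℝ))))
    hγ₀ hγ₁ (by positivity) (by positivity) hgbar hT (by linarith) hS hσ hocc
    (fun p hp w ↦ ?_) (fun p hp w ↦ ?_) hg (unstack.continuous.comp hε) (fun t ht ↦ ?_)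
  · exact two_mul_lyapunovForm_trackingField_le_neg_mul hk hγ₀ hγ₁.le hμ hβ hβ₀.le
      (mul_norm_sq_le_inner_toEuclideanLin_kronecker_one (hMc p hp) w.1)
  · refine two_mul_lyapunovForm_trackingField_le_mul hk hγ₀ hγ₁ hα hα₀.le ?_
    simpa using mul_norm_sq_le_inner_toEuclideanLin_kronecker_one (l := 0)
      (by simpa using hMd p hp) w.1
  · rw [← unstack_errorMatrix_mulVec, ← map_add]
    exact unstack.hasFDerivAt.comp_hasDerivAt t (hε' t ht)

theorem dotProduct_self_sumElim_zero_neg (δ : D → ℝ) :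
    (fun iq : (N ⊕ N) × D ↦ Sum.elim (fun _ ↦ 0) (fun _ ↦ -δ iq.2) iq.1) ⬝ᵥ
      (fun iq ↦ Sum.elim (fun _ ↦ 0) (fun _ ↦ -δ iq.2) iq.1) = Fintype.card N * (δ ⬝ᵥ δ) := by
  simp [dotProduct, Fintype.sum_prod_type]

end TrackingError

/-- Theorem 2 of the paper. The switching signal `σ` (piecewise constant
with dwell time `τ`, switching times `ts i`) may visit both "connected" indices `p ∈ Pc`
(where `M p` is symmetric positive definite with eigenvalues `≥ λ̄ > 0`) and "disconnected"
indices `p ∈ Pd` (where `M p` is only symmetric positive semidefinite).  With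
`0 < γ < 1`, `k > 1/(4γ(1-γ²)λ̄)`, `μ̄ = (1-γ²)kλ̄ + γ - √(((1-γ²)kλ̄-γ)²+1)`,
`β = μ̄/(2(1+γ))`, `α = 2(√(1+γ²)-γ)/(1-γ)`, if on each window `[jT,(j+1)T)` the total
time with `σ(t) ∈ Pc` is at least `T^c`, the total time with `σ(t) ∈ Pd` is at most
`T - T^c`, and `βT^c > α(T - T^c)`, then there is a constant `C₀ ≥ 0`, depending only on
`n, γ, k, λ̄, α, β, T, T^c, τ`, such that every solution `ε` of the switched error system
`ε̇ = (F_{σ(t)} ⊗ I₂)ε + g` (with `‖δ(t)‖ ≤ δ̄`) satisfies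
`limsup_{t→∞} ‖ε(t)‖ ≤ C₀·δ̄` (a bound proportional to `δ̄`). Here `z ⬝ᵥ z = ‖z‖²`. -/
theorem tracking_error_bound_jointly_connected {n : ℕ} (hn : 1 ≤ n)
    (lam γ k T Tc τ : ℝ)
    (hlam : 0 < lam) (hγ0 : 0 < γ) (hγ1 : γ < 1)
    (hk : 1 / (4 * γ * (1 - γ ^ 2) * lam) < k)
    (hT : 0 < T) (hTc0 : 0 < Tc) (hTcT : Tc ≤ T) (hτ : 0 < τ)
    (μ β α : ℝ)
    (hμ : μ = (1 - γ ^ 2) * k * lam + γ -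
      Real.sqrt (((1 - γ ^ 2) * k * lam - γ) ^ 2 + 1))
    (hβ : β = μ / (2 * (1 + γ)))
    (hα : α = 2 * (Real.sqrt (1 + γ ^ 2) - γ) / (1 - γ))
    (hwin : α * (T - Tc) < β * Tc) :
    ∃ C₀ : ℝ, 0 ≤ C₀ ∧
      ∀ (ι : Type) (_ : Fintype ι) (Pc Pd : Set ι), Pc ∪ Pd = Set.univ →
      ∀ (M : ι → Matrix (Fin n) (Fin n) ℝ)
        (hMc : ∀ p ∈ Pc, (M p).PosDef),
        (∀ (p : ι) (hp : p ∈ Pc) (i : Fin n), lam ≤ (hMc p hp).1.eigenvalues i) →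
        (∀ p ∈ Pd, (M p).PosSemidef) →
      ∀ (δbar : ℝ), 0 ≤ δbar →
      ∀ (σ : ℝ → ι) (ts : ℕ → ℝ),
        ts 0 = 0 → StrictMono ts →
        (∀ i, τ ≤ ts (i + 1) - ts i) →
        Filter.Tendsto ts Filter.atTop Filter.atTop →
        (∀ i, ∀ s ∈ Set.Ico (ts i) (ts (i + 1)), σ s = σ (ts i)) →
        (∀ j : ℕ, ENNReal.ofReal Tc ≤
          MeasureTheory.volume
            {s : ℝ | s ∈ Set.Ico ((j : ℝ) * T) (((j : ℝ) + 1) * T) ∧ σ s ∈ Pc}) →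
        (∀ j : ℕ,
          MeasureTheory.volume
            {s : ℝ | s ∈ Set.Ico ((j : ℝ) * T) (((j : ℝ) + 1) * T) ∧ σ s ∈ Pd} ≤
              ENNReal.ofReal (T - Tc)) →
      ∀ (δ : ℝ → Fin 2 → ℝ), (∀ t, 0 ≤ t → δ t ⬝ᵥ δ t ≤ δbar ^ 2) →
      ∀ (ε : ℝ → ((Fin n ⊕ Fin n) × Fin 2) → ℝ), Continuous ε →
        (∀ s, 0 ≤ s → (∀ i, s ≠ ts i) →
          HasDerivAt ε
            (((Matrix.fromBlocks (-(k • M (σ s))) (1 : Matrix (Fin n) (Fin n) ℝ)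
                  (-((γ * k) • M (σ s))) 0) ⊗ₖ
                (1 : Matrix (Fin 2) (Fin 2) ℝ)).mulVec (ε s) +
              fun iq => Sum.elim (fun _ => (0 : ℝ)) (fun _ => -δ s iq.2) iq.1) s) →
        Filter.limsup (fun t => Real.sqrt (ε t ⬝ᵥ ε t)) Filter.atTop ≤ C₀ * δbar := by
  have hγ : 0 < 1 - γ ^ 2 := by nlinarith
  have hk₀ : 0 < k := lt_trans (by positivity) hk
  have hα₀ : 0 < α := growthRate_pos hγ1 hα
  have hβ₀ : 0 < β * Tc := (mul_nonneg hα₀.le (sub_nonneg.2 hTcT)).trans_lt hwin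
  refine ⟨trackingGain γ T Tc (2 * β) (α / 2) * √n,
    mul_nonneg (Real.sqrt_nonneg _) (Real.sqrt_nonneg _), ?_⟩
  intro ι _ Pc Pd hP M hMc hlamM hMd δbar hδbar σ ts hts₀ _ _ hts hσ hocc _ δ hδ ε hε hε'
  rw [mul_assoc]
  refine tracking_error_bound_jointly_connected_general hγ0.le hγ1 hk₀.le hT hTc0 hTcT
    (by positivity) hμ hβ hα (by linarith)
    (fun p hp ↦ mul_dotProduct_self_le_of_le_eigenvalues_s11 (hMc p hp).1 (hlamM p hp))
    (fun p hp ↦ (hMd p ((hP.ge (Set.mem_univ p)).resolve_left hp)).dotProduct_mulVec_nonneg)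
    (Set.countable_range ts) (fun t ht ↦ eventually_eq_of_eq_on_Ico hts hσ (hts₀ ▸ ht)) hocc
    (fun t ht ↦ ?_) hε (fun t ht ↦ hε' t (le_of_lt ht.1) fun i hi ↦ ht.2 ⟨i, hi.symm⟩)
  rw [dotProduct_self_sumElim_zero_neg, mul_pow, Real.sq_sqrt n.cast_nonneg, Fintype.card_fin]
  exact mul_le_mul_of_nonneg_left (hδ t (le_of_lt ht.1)) n.cast_nonneg
end
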